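/- Let K be a field, A = K[x_1, ..., x_n], and F ∈ A^{l×l} with det(F) = p^t, where p ∈ K[x_1] is an irreducible polynomial and t is a positive integer. Assume the Smith form of F is diag(p^{s_1}, ..., p^{s_l}) with s_1 ≤ ... ≤ s_l. Suppose F is equivalent to diag(p^{s_1}, ..., p^{s_k}, p^s, ..., p^s) · G for some G ∈ A^{l×l}, where s_k ≤ s < s_{k+1}, and suppose J_i(F) = A for i = 1, ..., k. Then there exists U ∈ GL_l(A) such that U·G = diag(1, ..., 1, p, ..., p) · G_1 for some G_1 ∈ A^{l×l}, where the diagonal matrix has exactly k entries equal to 1 and l − k entries equal to p. -/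

import Mathlib

/-- Two `l × m` matrices over a commutative ring are equivalent if they differ by
left/right multiplication by square matrices with unit determinant. -/
def MatrixEquiv {B : Type*} [CommRing B] {l m : ℕ}
    (F G : Matrix (Fin l) (Fin m) B) : Prop :=
  ∃ (U : Matrix (Fin l) (Fin l) B) (V : Matrix (Fin m) (Fin m) B),
    IsUnit U.det ∧ IsUnit V.det ∧ F = U * G * V

/-- The set of all `i × i` minors of a matrix. -/
def minorsSet {R : Type*} [CommRing R] {l m : ℕ} (i : ℕ)
    (F : Matrix (Fin l) (Fin m) R) : Set R :=
  {a | ∃ (f : Fin i → Fin l) (g : Fin i → Fin m),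
      StrictMono f ∧ StrictMono g ∧ a = (F.submatrix f g).det}

/-- `d` is a greatest common divisor of the set `s`. -/
def IsGcdOf {R : Type*} [CommRing R] (d : R) (s : Set R) : Prop :=
  (∀ a ∈ s, d ∣ a) ∧ ∀ c : R, (∀ a ∈ s, c ∣ a) → c ∣ d

/-- `J_i(F) = A`: letting `d` be a gcd of the `i × i` minors of `F`, the `i × i`
reduced minors (the minors divided by `d`) generate the unit ideal. -/
def ReducedMinorsUnitIdeal {R : Type*} [CommRing R] {l m : ℕ} (i : ℕ)
    (F : Matrix (Fin l) (Fin m) R) : Prop :=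
  ∃ d : R, IsGcdOf d (minorsSet i F) ∧
    Ideal.span {b : R | d * b ∈ minorsSet i F} = ⊤

/-- The image of a univariate polynomial `p ∈ K[x₁]` in `A = K[x₁, …, x_{n+1}]`,
sending the variable to `x₁` (the variable of index `0`). -/
noncomputable def polyImage {K : Type*} [CommRing K] (n : ℕ) (p : Polynomial K) :
    MvPolynomial (Fin (n + 1)) K :=
  Polynomial.aeval (MvPolynomial.X 0) p

namespace QS

set_option linter.unusedSectionVars false

open Polynomial

section Congruence

variable {A B ι κ μ : Type*} [CommRing A] [CommRing B]

/-- Congruence of matrices modulo a ring element. -/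
def MCong (p : A) (X Y : Matrix ι κ A) : Prop := ∀ i j, p ∣ X i j - Y i j

namespace MCong

variable {p : A}

theorem iff_map {X Y : Matrix ι κ A} : MCong p X Y ↔
    X.map (Ideal.Quotient.mk (Ideal.span {p})) = Y.map (Ideal.Quotient.mk (Ideal.span {p})) := by
  simp only [MCong, ← Matrix.ext_iff, Matrix.map_apply, Ideal.Quotient.mk_eq_mk_iff_sub_mem,
    Ideal.mem_span_singleton]

theorem iff_exists {X Y : Matrix ι κ A} : MCong p X Y ↔ ∃ Z : Matrix ι κ A, X = Y + p • Z := by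
  constructor
  · intro h
    choose Z hZ using h
    refine ⟨Matrix.of Z, ?_⟩
    ext i j
    simp [← hZ]
  · rintro ⟨Z, rfl⟩ i j
    simp

theorem of_eq {X Y : Matrix ι κ A} (h : X = Y) : MCong p X Y := by
  subst h; intro i j; simp

theorem refl (X : Matrix ι κ A) : MCong p X X := of_eq rfl

theorem symm {X Y : Matrix ι κ A} (h : MCong p X Y) : MCong p Y X :=
  iff_map.2 (iff_map.1 h).symm

theorem trans {X Y Z : Matrix ι κ A} (h : MCong p X Y) (h' : MCong p Y Z) : MCong p X Z :=
  iff_map.2 ((iff_map.1 h).trans (iff_map.1 h'))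

theorem add {X Y X' Y' : Matrix ι κ A} (h : MCong p X Y) (h' : MCong p X' Y') :
    MCong p (X + X') (Y + Y') := fun i j => by
  have := dvd_add (h i j) (h' i j)
  rwa [show (X + X') i j - (Y + Y') i j = X i j - Y i j + (X' i j - Y' i j) by
    simp only [Matrix.add_apply]; ring]

theorem sub {X Y X' Y' : Matrix ι κ A} (h : MCong p X Y) (h' : MCong p X' Y') :
    MCong p (X - X') (Y - Y') := fun i j => by
  have := dvd_sub (h i j) (h' i j)
  rwa [show (X - X') i j - (Y - Y') i j = X i j - Y i j - (X' i j - Y' i j) by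
    simp only [Matrix.sub_apply]; ring]

theorem smul {X Y : Matrix ι κ A} (h : MCong p X Y) (a : A) : MCong p (a • X) (a • Y) :=
  fun i j => by
    have := (h i j).mul_left a
    rwa [mul_sub] at this

theorem sum {σ : Type*} {s : Finset σ} {X Y : σ → Matrix ι κ A} (h : ∀ i ∈ s, MCong p (X i) (Y i)) :
    MCong p (∑ i ∈ s, X i) (∑ i ∈ s, Y i) := fun i j => by
  rw [Matrix.sum_apply, Matrix.sum_apply, ← Finset.sum_sub_distrib]
  exact Finset.dvd_sum fun a ha => h a ha i j

theorem mul [Fintype κ] {X Y : Matrix ι κ A} {X' Y' : Matrix κ μ A} (h : MCong p X Y)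
    (h' : MCong p X' Y') : MCong p (X * X') (Y * Y') := by
  rw [iff_map] at *
  rw [Matrix.map_mul, Matrix.map_mul, h, h']

theorem mul_left [Fintype κ] {X' Y' : Matrix κ μ A} (X : Matrix ι κ A)
    (h' : MCong p X' Y') : MCong p (X * X') (X * Y') := mul (refl X) h'

theorem mul_right [Fintype κ] {X Y : Matrix ι κ A} (h : MCong p X Y)
    (X' : Matrix κ μ A) : MCong p (X * X') (Y * X') := mul h (refl X')

theorem map {X Y : Matrix ι κ A} (h : MCong p X Y) (f : A →+* B) :
    MCong (f p) (X.map f) (Y.map f) := fun i j => by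
  simpa using map_dvd f (h i j)

theorem of_isUnit (hp : IsUnit p) (X Y : Matrix ι κ A) : MCong p X Y := fun _ _ => hp.dvd

end MCong

/-- The coordinate projection onto the indices in `T`. -/
def coordProj (A : Type*) [CommRing A] [DecidableEq ι] (T : Finset ι) :
    Matrix ι ι A := Matrix.diagonal fun i => if i ∈ T then 1 else 0

section
variable [DecidableEq ι] (T : Finset ι)

theorem coordProj_map (f : A →+* B) : (coordProj A T).map f = coordProj B T := by
  simp only [coordProj, Matrix.diagonal_map (map_zero f)]
  congr 1
  ext i
  simp [apply_ite f]

variable [Fintype ι]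

theorem coordProj_mul_apply (X : Matrix ι κ A) (i : ι) (j : κ) :
    (coordProj A T * X) i j = if i ∈ T then X i j else 0 := by
  simp [coordProj, Matrix.diagonal_mul]

theorem mul_coordProj_apply (X : Matrix κ ι A) (i : κ) (j : ι) :
    (X * coordProj A T) i j = if j ∈ T then X i j else 0 := by
  simp [coordProj, Matrix.mul_diagonal]

theorem coordProj_mul_self : coordProj A T * coordProj A T = coordProj A T := by
  ext i j
  rw [coordProj_mul_apply]
  by_cases h : i ∈ T <;> simp [coordProj, h, Matrix.diagonal_apply]

/-- `e` becomes a coordinate projection modulo `p` after a change of basis. -/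
def Diagonalizable (p : A) (e : Matrix ι ι A) : Prop :=
  ∃ (W : Matrix ι ι A) (T : Finset ι), IsUnit W.det ∧
    MCong p (W * e) (coordProj A T * W)

end

end Congruence

section MonicLocalization

variable (R : Type*) [CommRing R]

/-- The multiplicative set of monic polynomials. -/
def monicSubmonoid : Submonoid R[X] where
  carrier := {f | f.Monic}
  mul_mem' := fun hf hg => Polynomial.Monic.mul hf hg
  one_mem' := Polynomial.monic_one

variable {R}

theorem mem_monicSubmonoid {f : R[X]} : f ∈ monicSubmonoid R ↔ f.Monic := Iff.rfl

theorem monicSubmonoid_le_nonZeroDivisors : monicSubmonoid R ≤ nonZeroDivisors R[X] :=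
  fun _ hf => Polynomial.Monic.mem_nonZeroDivisors hf

theorem C_dvd_of_C_dvd_monic_mul {p : R} {f g : R[X]} (hf : f.Monic) (h : C p ∣ f * g) :
    C p ∣ g := by
  have key : ∀ g : R[X], C p ∣ g ↔ g.map (Ideal.Quotient.mk (Ideal.span {p})) = 0 := by
    intro g
    rw [Polynomial.C_dvd_iff_dvd_coeff, Polynomial.ext_iff]
    simp [Ideal.Quotient.eq_zero_iff_mem, Ideal.mem_span_singleton]
  rw [key] at h ⊢
  rw [Polynomial.map_mul] at h
  exact ((hf.map _).mul_right_eq_zero_iff).1 h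

variable {B : Type*} [CommRing B] [Algebra R[X] B] [IsLocalization (monicSubmonoid R) B]

theorem exists_monic_mul_eq (b : B) : ∃ f g : R[X], f.Monic ∧
    algebraMap R[X] B f * b = algebraMap R[X] B g := by
  obtain ⟨⟨g, f⟩, h⟩ := IsLocalization.surj (monicSubmonoid R) b
  exact ⟨f, g, f.2, by rw [mul_comm]; exact h⟩

theorem isUnit_algebraMap_monic {f : R[X]} (hf : f.Monic) : IsUnit (algebraMap R[X] B f) :=
  IsLocalization.map_units B (⟨f, hf⟩ : monicSubmonoid R)

variable (B) in
theorem algebraMap_monicLocalization_injective : Function.Injective (algebraMap R[X] B) :=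
  IsLocalization.injective B monicSubmonoid_le_nonZeroDivisors

theorem C_dvd_of_algebraMap_dvd {p : R} {g : R[X]}
    (h : algebraMap R[X] B (C p) ∣ algebraMap R[X] B g) : C p ∣ g := by
  obtain ⟨b, hb⟩ := h
  obtain ⟨f, g', hf, hfg⟩ := exists_monic_mul_eq (R := R) b
  refine C_dvd_of_C_dvd_monic_mul hf ⟨g', algebraMap_monicLocalization_injective B ?_⟩
  rw [map_mul, map_mul, hb, ← hfg]
  ring

theorem MCong.of_map_algebraMap {ι κ : Type*} {p : R} {X Y : Matrix ι κ R[X]}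
    (h : MCong (algebraMap R[X] B (C p)) (X.map (algebraMap R[X] B)) (Y.map (algebraMap R[X] B))) :
    MCong (C p) X Y := fun i j =>
  C_dvd_of_algebraMap_dvd (B := B) (by simpa using h i j)

variable [Algebra R B] [IsScalarTower R R[X] B]

variable (R B) in
/-- Fractions `g / f` with `f` monic and `deg g ≤ deg f`. -/
def properFractions : Subalgebra R B where
  carrier := {b | ∃ f g : R[X], f.Monic ∧ g.natDegree ≤ f.natDegree ∧
    algebraMap R[X] B f * b = algebraMap R[X] B g}
  mul_mem' := by
    rintro b b' ⟨f, g, hf, hd, h⟩ ⟨f', g', hf', hd', h'⟩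
    refine ⟨f * f', g * g', hf.mul hf', ?_, ?_⟩
    · rw [hf.natDegree_mul hf']
      exact Polynomial.natDegree_mul_le.trans (add_le_add hd hd')
    · rw [map_mul, map_mul, ← h, ← h']; ring
  add_mem' := by
    rintro b b' ⟨f, g, hf, hd, h⟩ ⟨f', g', hf', hd', h'⟩
    refine ⟨f * f', g * f' + f * g', hf.mul hf', ?_, ?_⟩
    · rw [hf.natDegree_mul hf']
      refine Polynomial.natDegree_add_le_of_degree_le ?_ ?_ <;>
      exact Polynomial.natDegree_mul_le.trans (by omega)
    · rw [map_mul, map_add, map_mul, map_mul, ← h, ← h']; ring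
  algebraMap_mem' := fun r => ⟨1, C r, Polynomial.monic_one, by simp, by
    simp [IsScalarTower.algebraMap_apply R R[X] B]⟩

/-- Every fraction is the sum of a polynomial and a proper fraction. -/
theorem exists_eq_algebraMap_add_properFraction (b : B) :
    ∃ h : R[X], ∃ o ∈ properFractions R B, b = algebraMap R[X] B h + o := by
  obtain ⟨f, g, hf, hfg⟩ := exists_monic_mul_eq (R := R) b
  refine ⟨g /ₘ f, b - algebraMap R[X] B (g /ₘ f), ⟨f, g %ₘ f, hf, ?_, ?_⟩, by ring⟩
  · exact Polynomial.natDegree_modByMonic_le _ hf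
  · have := congrArg (algebraMap R[X] B) (Polynomial.modByMonic_add_div g f)
    rw [map_add, map_mul] at this
    rw [mul_sub, hfg, ← this]
    ring

end MonicLocalization

section Decomposition

variable {R : Type*} [CommRing R] {ι : Type*} [DecidableEq ι]

/-- The ideal of admissible `(a, b)` entries: `m` inside the blocks determined by `T` and `(p)`
outside. -/
def blockIdeal (m : Ideal R) (p : R) (T : Finset ι) (a b : ι) : Ideal R :=
  if (a ∈ T ↔ b ∈ T) then m else Ideal.span {p}

variable {m : Ideal R} {p : R} {T : Finset ι}

theorem blockIdeal_le (hp : p ∈ m) (a b : ι) : blockIdeal m p T a b ≤ m := by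
  unfold blockIdeal
  split_ifs
  · exact le_rfl
  · rwa [Ideal.span_singleton_le_iff_mem]

theorem blockIdeal_mul_le (hp : p ∈ m) (a b c : ι) :
    blockIdeal m p T a b * blockIdeal m p T b c ≤ m * blockIdeal m p T a c := by
  by_cases hab : (a ∈ T ↔ b ∈ T)
  · have : blockIdeal m p T b c = blockIdeal m p T a c := by simp only [blockIdeal, hab]
    rw [this]
    exact Ideal.mul_mono_left (blockIdeal_le hp a b)
  · by_cases hbc : (b ∈ T ↔ c ∈ T)
    · have : blockIdeal m p T a b = blockIdeal m p T a c := by simp only [blockIdeal, hbc]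
      rw [this, mul_comm]
      exact Ideal.mul_mono_left (blockIdeal_le hp b c)
    · have : blockIdeal m p T a c = m := by
        simp only [blockIdeal, if_pos (show (a ∈ T ↔ c ∈ T) by tauto)]
      rw [this]
      exact Ideal.mul_mono (blockIdeal_le hp a b) (blockIdeal_le hp b c)

variable (B : Type*) [CommRing B] [Algebra R B]

variable (m p T) in
/-- Matrices whose `(a, b)` entry lies in the extension of `blockIdeal m p T a b`. -/
def blockMatrices : Submodule R (Matrix ι ι B) where
  carrier := {M | ∀ a b, M a b ∈ (blockIdeal m p T a b).map (algebraMap R B)}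
  add_mem' := fun h h' a b => add_mem (h a b) (h' a b)
  zero_mem' := fun a b => zero_mem _
  smul_mem' := fun r M h a b => by
    rw [Matrix.smul_apply, Algebra.smul_def]
    exact Ideal.mul_mem_left _ _ (h a b)

variable {B}

theorem single_mem_blockMatrices {a b : ι} {β : B}
    (hβ : β ∈ (blockIdeal m p T a b).map (algebraMap R B)) :
    Matrix.single a b β ∈ blockMatrices m p T B := by
  intro a' b'
  rw [Matrix.single_apply]
  split_ifs with h
  · rw [← h.1, ← h.2]; exact hβ
  · exact zero_mem _

theorem mem_smul_blockMatrices [Fintype ι] {M : Matrix ι ι B}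
    (h : ∀ a b, M a b ∈ (m * blockIdeal m p T a b).map (algebraMap R B)) :
    M ∈ m • blockMatrices m p T B := by
  rw [Matrix.matrix_eq_sum_single M]
  refine sum_mem fun a _ => sum_mem fun b _ => ?_
  have h1 : M a b ∈ m • (blockIdeal m p T a b • (⊤ : Submodule R B)) := by
    rw [← Submodule.mul_smul, Ideal.smul_top_eq_map]
    exact h a b
  have h2 := Submodule.mem_map_of_mem (f := Matrix.singleLinearMap R a b) h1
  rw [Submodule.map_smul''] at h2
  refine Submodule.smul_mono le_rfl ?_ h2
  rintro _ ⟨β, hβ, rfl⟩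
  rw [Ideal.smul_top_eq_map] at hβ
  exact single_mem_blockMatrices hβ

/-- Admissible corrections with polynomial entries. -/
def intertwiners [Fintype ι] (m : Ideal R) (p : R) (T : Finset ι) (e : Matrix ι ι R[X]) :
    Submodule R (Matrix ι ι R[X]) where
  carrier := {Y | MCong (C p) (Y * e) (coordProj R[X] T * Y) ∧ ∀ a b, Y a b ∈ m.map C}
  add_mem' := fun h h' => ⟨by
    rw [add_mul, mul_add]; exact h.1.add h'.1, fun a b => add_mem (h.2 a b) (h'.2 a b)⟩
  zero_mem' := ⟨MCong.of_eq (by simp), fun a b => zero_mem _⟩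
  smul_mem' := fun r Y h => ⟨by
    have := h.1.smul (C r)
    rw [← Matrix.smul_mul, ← Matrix.mul_smul] at this
    have hr : r • Y = (C r) • Y := by
      ext1 a b
      simp [Polynomial.smul_eq_C_mul]
    rwa [hr], fun a b => by
    rw [Matrix.smul_apply, Polynomial.smul_eq_C_mul]
    exact Ideal.mul_mem_left _ _ (h.2 a b)⟩

theorem mul_mem_intertwiners [Fintype ι] (hp : p ∈ m) {e q : Matrix ι ι R[X]}
    (hq : MCong (C p) (q * e) (coordProj R[X] T * q)) {a b : ι} {μ : R[X]}
    (hμ : μ ∈ (blockIdeal m p T a b).map C) :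
    Matrix.single a b μ * q ∈ intertwiners m p T e := by
  have hμm : μ ∈ m.map C := Ideal.map_mono (blockIdeal_le hp a b) hμ
  refine ⟨?_, fun i j => ?_⟩
  · rw [Matrix.mul_assoc]
    refine (hq.mul_left _).trans ?_
    rw [← Matrix.mul_assoc, ← Matrix.mul_assoc]
    refine MCong.mul_right (fun i j => ?_) _
    rw [mul_coordProj_apply, coordProj_mul_apply, Matrix.single_apply]
    by_cases h : a = i ∧ b = j
    · obtain ⟨rfl, rfl⟩ := h
      by_cases hab : (a ∈ T ↔ b ∈ T)
      · simp [hab]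
      · have : C p ∣ μ := by
          rw [blockIdeal, if_neg hab, Ideal.map_span, Set.image_singleton,
            Ideal.mem_span_singleton] at hμ
          exact hμ
        by_cases ha : a ∈ T <;> by_cases hb : b ∈ T <;> simp [ha, hb, this]
    · simp [h]
  · rw [Matrix.mul_apply]
    refine sum_mem fun c _ => ?_
    rw [Matrix.single_apply]
    split_ifs
    · exact Ideal.mul_mem_right _ _ hμm
    · rw [zero_mul]; exact zero_mem _

end Decomposition

section BoundedDegree

variable {R : Type*} [CommRing R] {ι : Type*} [DecidableEq ι] [Fintype ι]
variable {B : Type*} [CommRing B] [Algebra R[X] B] [IsLocalization (monicSubmonoid R) B]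
variable [Algebra R B] [IsScalarTower R R[X] B]

theorem exists_monic_smul_matrix (D : Matrix ι ι B) : ∃ (F : R[X]) (Q : Matrix ι ι R[X]),
    F.Monic ∧ Q.map (algebraMap R[X] B) = algebraMap R[X] B F • D := by
  classical
  obtain ⟨F, hF⟩ := IsLocalization.exist_integer_multiples_of_finset (monicSubmonoid R)
    (Finset.univ.image fun ab : ι × ι => D ab.1 ab.2)
  have h : ∀ a b, ∃ g, algebraMap R[X] B g = algebraMap R[X] B F * D a b := fun a b => by
    obtain ⟨g, hg⟩ := hF (D a b) (Finset.mem_image_of_mem (fun ab : ι × ι => D ab.1 ab.2)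
      (Finset.mem_univ (a, b)))
    exact ⟨g, by rw [hg, Algebra.smul_def]⟩
  choose Q hQ using h
  exact ⟨F, Matrix.of Q, F.2, by ext a b; simp [hQ]⟩

variable (B) in
/-- The map `Y ↦ Y * Di` from polynomial matrices to matrices over the localization. -/
noncomputable def mulRightLinear (Di : Matrix ι ι B) : Matrix ι ι R[X] →ₗ[R] Matrix ι ι B where
  toFun Y := Y.map (algebraMap R[X] B) * Di
  map_add' Y Y' := by rw [Matrix.map_add _ (map_add _), add_mul]
  map_smul' r Y := by
    rw [RingHom.id_apply, ← Matrix.smul_mul]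
    congr 1
    ext a b
    rw [Matrix.map_apply, Matrix.smul_apply, Matrix.smul_apply, Polynomial.smul_eq_C_mul]
    simp [Algebra.smul_def, IsScalarTower.algebraMap_apply R R[X] B]

variable {m : Ideal R} {p : R} {T : Finset ι}

variable (R B) in
/-- Polynomials of degree less than `d`, inside the localization. -/
noncomputable def boundedPolys (d : ℕ) : Submodule R B :=
  (Polynomial.degreeLT R d).map (IsScalarTower.toAlgHom R R[X] B).toLinearMap

variable (m p T B) in
/-- Block matrices with polynomial entries of bounded degree. -/
noncomputable def boundedBlockMatrices (d : ℕ) : Submodule R (Matrix ι ι B) :=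
  ⨆ ab : ι × ι, (blockIdeal m p T ab.1 ab.2 • boundedPolys R B d).map
    (Matrix.singleLinearMap R ab.1 ab.2)

theorem boundedBlockMatrices_fg [IsNoetherianRing R] (d : ℕ) :
    (boundedBlockMatrices B m p T d).FG := by
  classical
  refine Submodule.fg_iSup _ fun ab => Submodule.FG.map _ ?_
  have hfg : (boundedPolys R B d).FG := by
    refine Submodule.FG.map _ ?_
    rw [Polynomial.degreeLT_eq_span_X_pow]
    exact ⟨_, rfl⟩
  exact Submodule.FG.of_le hfg Submodule.smul_le_right

variable (ι R B) in
/-- Matrices of proper fractions. -/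
def properMatrices : Submodule R (Matrix ι ι B) where
  carrier := {M | ∀ a b, M a b ∈ properFractions R B}
  add_mem' := fun h h' a b => add_mem (h a b) (h' a b)
  zero_mem' := fun _ _ => zero_mem _
  smul_mem' := fun r _ h a b => Subalgebra.smul_mem _ (h a b) r

theorem blockMatrices_le_boundedBlockMatrices_sup (hp : p ∈ m) {e : Matrix ι ι R[X]}
    {D Di : Matrix ι ι B} (hDDi : D * Di = 1)
    (hD : MCong (algebraMap R[X] B (C p)) (D * e.map (algebraMap R[X] B)) (coordProj B T * D)) :
    ∃ d : ℕ, blockMatrices m p T B ≤ boundedBlockMatrices B m p T d ⊔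
      ((intertwiners m p T e).map (mulRightLinear B Di) ⊔
        blockMatrices m p T B ⊓ properMatrices R ι B) := by
  obtain ⟨F, Q, hF, hQ⟩ := exists_monic_smul_matrix (R := R) D
  have hQe : MCong (C p) (Q * e) (coordProj R[X] T * Q) := by
    refine MCong.of_map_algebraMap (B := B) ?_
    rw [Matrix.map_mul, Matrix.map_mul, hQ, coordProj_map, Matrix.smul_mul, Matrix.mul_smul]
    exact hD.smul _
  refine ⟨F.natDegree, fun M hM => ?_⟩
  rw [Matrix.matrix_eq_sum_single M]
  refine sum_mem fun a _ => sum_mem fun b _ => ?_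
  have h1 : M a b ∈ blockIdeal m p T a b • (⊤ : Submodule R B) := by
    rw [Ideal.smul_top_eq_map]
    exact hM a b
  rw [← Matrix.singleLinearMap_apply (R := R), ← Submodule.mem_comap]
  refine Submodule.smul_induction_on h1 (fun μ hμ β _ => ?_) fun x y hx hy => add_mem hx hy
  obtain ⟨h, o, ho, rfl⟩ := exists_eq_algebraMap_add_properFraction (R := R) β
  rw [← Polynomial.modByMonic_add_div h F, map_add, smul_add, smul_add]
  have hμC : ∀ h : R[X], C μ * h ∈ (blockIdeal m p T a b).map C := fun h =>
    Ideal.mul_mem_right _ _ (Ideal.mem_map_of_mem C hμ)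
  have hμB : ∀ h : B, μ • h ∈ (blockIdeal m p T a b).map (algebraMap R B) := fun h => by
    rw [Algebra.smul_def]
    exact Ideal.mul_mem_right _ _ (Ideal.mem_map_of_mem _ hμ)
  refine add_mem (add_mem ?_ ?_) ?_
  · refine Submodule.mem_sup_left (Submodule.mem_iSup_of_mem (a, b)
      (Submodule.mem_map_of_mem (Submodule.smul_mem_smul hμ ⟨_, ?_, rfl⟩)))
    rw [SetLike.mem_coe, Polynomial.mem_degreeLT]
    by_cases hR : Nontrivial R
    · exact (Polynomial.degree_modByMonic_lt _ hF).trans_le Polynomial.degree_le_natDegree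
    · rw [not_nontrivial_iff_subsingleton] at hR
      rw [Subsingleton.elim (h %ₘ F) 0, Polynomial.degree_zero]
      exact WithBot.bot_lt_coe _
  · refine Submodule.mem_sup_right (Submodule.mem_sup_left
      ⟨Matrix.single a b (C μ * (h /ₘ F)) * Q, mul_mem_intertwiners hp hQe (hμC _), ?_⟩)
    change (Matrix.single a b (C μ * (h /ₘ F)) * Q).map (algebraMap R[X] B) * Di = _
    rw [Matrix.map_mul, hQ, Matrix.mul_smul, Matrix.smul_mul, Matrix.mul_assoc, hDDi,
      Matrix.mul_one, Matrix.singleLinearMap_apply, Matrix.map_single,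
      Matrix.smul_single]
    congr 1
    simp only [map_mul, smul_eq_mul, Algebra.smul_def, IsScalarTower.algebraMap_apply R R[X] B,
      Polynomial.algebraMap_eq]
    ring
  · refine Submodule.mem_sup_right (Submodule.mem_sup_right
      ⟨single_mem_blockMatrices (hμB _), fun a' b' => ?_⟩)
    rw [Matrix.singleLinearMap_apply, Matrix.single_apply]
    split_ifs
    · exact Subalgebra.smul_mem _ ho _
    · exact zero_mem _

theorem boundedBlockMatrices_le (hp : p ∈ m) {e q : Matrix ι ι R[X]}
    {Di : Matrix ι ι B} (hq : MCong (C p) (q * e) (coordProj R[X] T * q))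
    (hx : q.map (algebraMap R[X] B) * Di - 1 ∈ blockMatrices m p T B) (d : ℕ) :
    boundedBlockMatrices B m p T d ≤ (intertwiners m p T e).map (mulRightLinear B Di) ⊔
      m • blockMatrices m p T B := by
  refine iSup_le fun ⟨a, b⟩ => Submodule.map_le_iff_le_comap.2 fun β hβ => ?_
  refine Submodule.smul_induction_on hβ (fun μ hμ β hβ => ?_) fun x y hx hy => add_mem hx hy
  obtain ⟨r, -, rfl⟩ := hβ
  set x := q.map (algebraMap R[X] B) * Di - 1 with hxdef
  have h1 : q.map (algebraMap R[X] B) * Di = 1 + x := by rw [hxdef]; abel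
  have hμB : μ • algebraMap R[X] B r ∈ (blockIdeal m p T a b).map (algebraMap R B) := by
    rw [Algebra.smul_def]
    exact Ideal.mul_mem_right _ _ (Ideal.mem_map_of_mem _ hμ)
  have h2 : Matrix.single a b (μ • algebraMap R[X] B r) =
      mulRightLinear B Di (Matrix.single a b (C μ * r) * q) -
        Matrix.single a b (μ • algebraMap R[X] B r) * x := by
    change _ = (Matrix.single a b (C μ * r) * q).map (algebraMap R[X] B) * Di - _
    rw [Matrix.map_mul, Matrix.mul_assoc, h1, Matrix.map_single,
      Matrix.mul_add, Matrix.mul_one]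
    simp only [map_mul, Algebra.smul_def, IsScalarTower.algebraMap_apply R R[X] B,
      Polynomial.algebraMap_eq]
    abel
  rw [Submodule.mem_comap, Matrix.singleLinearMap_apply]
  change Matrix.single a b (μ • algebraMap R[X] B r) ∈ _ ⊔ _
  rw [h2]
  refine sub_mem (Submodule.mem_sup_left (Submodule.mem_map_of_mem
    (mul_mem_intertwiners hp hq (Ideal.mul_mem_right _ _ (Ideal.mem_map_of_mem C hμ)))))
    (Submodule.mem_sup_right (mem_smul_blockMatrices fun i c => ?_))
  rw [Matrix.mul_apply]
  refine sum_mem fun j _ => ?_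
  rw [Matrix.single_apply]
  split_ifs with h
  · obtain ⟨rfl, rfl⟩ := h
    refine Ideal.map_mono (blockIdeal_mul_le hp a b c) ?_
    rw [Ideal.map_mul]
    exact Ideal.mul_mem_mul hμB (hx b c)
  · rw [zero_mul]; exact zero_mem _

/-- Horrocks-type decomposition of block matrices, via Nakayama's lemma. -/
theorem exists_block_decomposition [IsLocalRing R] [IsNoetherianRing R]
    (hp : p ∈ IsLocalRing.maximalIdeal R) {e q : Matrix ι ι R[X]} {D Di : Matrix ι ι B}
    (hDDi : D * Di = 1)
    (hD : MCong (algebraMap R[X] B (C p)) (D * e.map (algebraMap R[X] B)) (coordProj B T * D))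
    (hq : MCong (C p) (q * e) (coordProj R[X] T * q))
    (hx : q.map (algebraMap R[X] B) * Di - 1 ∈
      blockMatrices (IsLocalRing.maximalIdeal R) p T B) :
    ∃ Y ∈ intertwiners (IsLocalRing.maximalIdeal R) p T e,
      ∃ o ∈ blockMatrices (IsLocalRing.maximalIdeal R) p T B, (o ∈ properMatrices R ι B) ∧
        q.map (algebraMap R[X] B) * Di = Y.map (algebraMap R[X] B) * Di + (1 + o) := by
  obtain ⟨d, hd⟩ := blockMatrices_le_boundedBlockMatrices_sup hp hDDi hD
  have hN := boundedBlockMatrices_le hp hq hx d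
  set m := IsLocalRing.maximalIdeal R
  set 𝒴 := (intertwiners m p T e).map (mulRightLinear B Di) ⊔
        blockMatrices m p T B ⊓ properMatrices R ι B with h𝒴
  have hN𝒴 : boundedBlockMatrices B m p T d ≤ 𝒴 := by
    refine Submodule.le_of_le_smul_of_le_jacobson_bot (I := m) (boundedBlockMatrices_fg d)
      (IsLocalRing.jacobson_eq_maximalIdeal _ bot_ne_top).ge (hN.trans ?_)
    refine sup_le (le_sup_left.trans le_sup_left) ((Submodule.smul_mono le_rfl hd).trans ?_)
    rw [Submodule.smul_sup]
    exact sup_le le_sup_right (Submodule.smul_le_right.trans le_sup_left)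
  have hx𝒴 := (hd.trans (sup_le hN𝒴 le_rfl)) hx
  obtain ⟨_, ⟨Y, hY, rfl⟩, o, ho, h⟩ := Submodule.mem_sup.1 hx𝒴
  refine ⟨Y, hY, o, ho.1, ho.2, ?_⟩
  rw [eq_sub_iff_add_eq] at h
  rw [← h]
  change Y.map (algebraMap R[X] B) * Di + o + 1 = _
  abel

end BoundedDegree

section UnitDet

variable {R : Type*} [CommRing R]

theorem mem_map_C_iff_map_eq_zero {I : Ideal R} {g : R[X]} :
    g ∈ I.map C ↔ g.map (Ideal.Quotient.mk I) = 0 := by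
  rw [Ideal.mem_map_C_iff, Polynomial.ext_iff]
  simp [Ideal.Quotient.eq_zero_iff_mem]

theorem mem_map_C_of_algebraMap_mem {B : Type*} [CommRing B] [Algebra R[X] B]
    [IsLocalization (monicSubmonoid R) B] {I : Ideal R} {g : R[X]}
    (h : algebraMap R[X] B g ∈ (I.map C).map (algebraMap R[X] B)) : g ∈ I.map C := by
  rw [IsLocalization.mem_map_algebraMap_iff (monicSubmonoid R)] at h
  obtain ⟨⟨⟨a, ha⟩, f, hf⟩, h⟩ := h
  rw [← map_mul] at h
  have h' : g * f = a := algebraMap_monicLocalization_injective B h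
  rw [mem_map_C_iff_map_eq_zero] at ha ⊢
  rw [← h', Polynomial.map_mul] at ha
  exact ((Polynomial.Monic.map _ hf).mul_left_eq_zero_iff).1 ha

theorem isUnit_of_dvd_monic [IsLocalRing R] {w G : R[X]} (hG : G.Monic) (hwG : w ∣ G)
    (hw : ∃ v, w * v - 1 ∈ (IsLocalRing.maximalIdeal R).map C) : IsUnit w := by
  have : Module.Finite R (R[X] ⧸ Ideal.span {G}) := hG.finite_quotient
  have hle : Ideal.span {G} ≤ Ideal.span {w} := Ideal.span_singleton_le_span_singleton.2 hwG
  have hfin : Module.Finite R (R[X] ⧸ Ideal.span {w}) :=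
    Module.Finite.of_surjective (Ideal.Quotient.factorₐ R hle).toLinearMap
      (Ideal.Quotient.factor_surjective hle)
  have htop : (⊤ : Submodule R (R[X] ⧸ Ideal.span {w})) = ⊥ := by
    refine Submodule.eq_bot_of_le_smul_of_le_jacobson_bot (IsLocalRing.maximalIdeal R) _
      hfin.fg_top ?_ (IsLocalRing.jacobson_eq_maximalIdeal _ bot_ne_top).ge
    rw [Ideal.smul_top_eq_map]
    obtain ⟨v, hv⟩ := hw
    have h1 := Ideal.mem_map_of_mem (Ideal.Quotient.mk (Ideal.span {w})) hv
    rw [map_sub, map_mul, Ideal.Quotient.mk_singleton_self, zero_mul, zero_sub, map_one,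
      Ideal.map_map, neg_mem_iff] at h1
    have h2 := (Ideal.eq_top_iff_one _).2 h1
    intro x _
    rw [Submodule.restrictScalars_mem]
    change x ∈ Ideal.map ((Ideal.Quotient.mk (Ideal.span {w})).comp C) _
    rw [h2]
    trivial
  have h1 : (1 : R[X] ⧸ Ideal.span {w}) ∈ (⊤ : Submodule R (R[X] ⧸ Ideal.span {w})) := trivial
  rw [htop, Submodule.mem_bot, ← map_one (Ideal.Quotient.mk _), Ideal.Quotient.eq_zero_iff_mem,
    Ideal.mem_span_singleton] at h1
  exact isUnit_of_dvd_one h1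

variable {ι : Type*} [DecidableEq ι] [Fintype ι]
variable {B : Type*} [CommRing B] [Algebra R[X] B] [IsLocalization (monicSubmonoid R) B]
variable [Algebra R B] [IsScalarTower R R[X] B]

theorem det_mem_properFractions {M : Matrix ι ι B} (h : M ∈ properMatrices R ι B) :
    M.det ∈ properFractions R B := by
  rw [Matrix.det_apply]
  exact sum_mem fun σ _ => by
    rw [Units.smul_def]
    exact zsmul_mem (prod_mem fun i _ => h _ _) _

theorem det_one_add_sub_one_mem {J : Ideal B} {o : Matrix ι ι B} (h : ∀ a b, o a b ∈ J) :
    (1 + o).det - 1 ∈ J := by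
  rw [← Ideal.Quotient.eq_zero_iff_mem, map_sub, RingHom.map_det, map_add, map_one]
  have : (Ideal.Quotient.mk J).mapMatrix o = 0 := by
    ext a b
    simpa using Ideal.Quotient.eq_zero_iff_mem.2 (h a b)
  rw [this, add_zero, Matrix.det_one, map_one, sub_self]

theorem isUnit_det_of_mul_eq_one_add [IsLocalRing R] {W : Matrix ι ι R[X]} {Di o : Matrix ι ι B}
    (hDi : W.map (algebraMap R[X] B) * Di = 1 + o) (ho : o ∈ properMatrices R ι B)
    (hom : ∀ a b, o a b ∈ (IsLocalRing.maximalIdeal R).map (algebraMap R B))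
    (hW : ∃ v, W.det * v - 1 ∈ (IsLocalRing.maximalIdeal R).map C) : IsUnit W.det := by
  obtain ⟨f, g, hf, hd, hfg⟩ := det_mem_properFractions
    (add_mem (show (1 : Matrix ι ι B) ∈ properMatrices R ι B from fun a b => by
      rw [Matrix.one_apply]; split_ifs; exacts [one_mem _, zero_mem _]) ho)
  have h1 := det_one_add_sub_one_mem hom
  set m := IsLocalRing.maximalIdeal R
  have hmap : m.map (algebraMap R B) = (m.map C).map (algebraMap R[X] B) := by
    rw [Ideal.map_map, IsScalarTower.algebraMap_eq R R[X] B, Polynomial.algebraMap_eq]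
  have h2 : g - f ∈ m.map C := by
    apply mem_map_C_of_algebraMap_mem (B := B)
    rw [map_sub, ← hfg, ← hmap, show algebraMap R[X] B f * (1 + o).det - algebraMap R[X] B f =
      algebraMap R[X] B f * ((1 + o).det - 1) by ring]
    exact Ideal.mul_mem_left _ _ h1
  have h3 : IsUnit (g.coeff f.natDegree) := by
    have := (Ideal.mem_map_C_iff.1 h2) f.natDegree
    rw [Polynomial.coeff_sub, hf.coeff_natDegree] at this
    by_contra hu
    have hu' : g.coeff f.natDegree ∈ m := (IsLocalRing.mem_maximalIdeal _).2 hu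
    have : (1 : R) ∈ m := by simpa using sub_mem hu' this
    exact (Ideal.ne_top_iff_one _).1 (IsLocalRing.maximalIdeal.isMaximal R).ne_top this
  obtain ⟨u, hu⟩ := h3.exists_left_inv
  have hmon : (C u * g).Monic := by
    refine Polynomial.monic_of_natDegree_le_of_coeff_eq_one f.natDegree ?_ ?_
    · exact (Polynomial.natDegree_C_mul_le _ _).trans hd
    · rw [Polynomial.coeff_C_mul, hu]
  obtain ⟨f', h, hf', hh⟩ := exists_monic_mul_eq (R := R) Di.det
  refine isUnit_of_dvd_monic (hmon.mul hf') ⟨C u * h * f, ?_⟩ hW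
  apply algebraMap_monicLocalization_injective B
  have hdet := congrArg Matrix.det hDi
  rw [Matrix.det_mul, ← RingHom.mapMatrix_apply, ← RingHom.map_det] at hdet
  simp only [map_mul, ← hfg, ← hh, ← hdet]
  ring

end UnitDet

section Idempotents

variable {ι : Type*} [DecidableEq ι] [Fintype ι]

theorem exists_perm_mem_iff {T T' : Finset ι} (h : T.card = T'.card) :
    ∃ σ : Equiv.Perm ι, ∀ i, σ i ∈ T' ↔ i ∈ T := by
  have e : {x // x ∈ T} ≃ {x // x ∈ T'} := Fintype.equivOfCardEq (by simpa using h)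
  refine ⟨e.extendSubtype, fun i => ⟨fun hi => ?_, fun hi => e.extendSubtype_mem i hi⟩⟩
  by_contra hi'
  exact e.extendSubtype_not_mem i hi' hi

theorem isUnit_det_submatrix_perm {A : Type*} [CommRing A] (σ : Equiv.Perm ι) {W : Matrix ι ι A}
    (hW : IsUnit W.det) : IsUnit (W.submatrix σ id).det := by
  rw [Matrix.det_permute]
  refine IsUnit.mul ?_ hW
  exact (Equiv.Perm.sign σ).isUnit.map (Int.castRingHom A)

theorem submatrix_perm_mul_cong {A : Type*} [CommRing A] {p : A} {W e : Matrix ι ι A}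
    {T T' : Finset ι} {σ : Equiv.Perm ι} (hσ : ∀ i, σ i ∈ T' ↔ i ∈ T)
    (h : MCong p (W * e) (coordProj A T' * W)) :
    MCong p (W.submatrix σ id * e) (coordProj A T * W.submatrix σ id) := fun i j => by
  have := h (σ i) j
  rw [coordProj_mul_apply] at this ⊢
  simpa [hσ, Matrix.mul_apply] using this

theorem rank_coordProj {L : Type*} [Field L] (T : Finset ι) : (coordProj L T).rank = T.card := by
  classical
  rw [coordProj, Matrix.rank_diagonal]
  simp

theorem card_eq_of_mul_coordProj {L : Type*} [Field L] {T T' : Finset ι} {g : Matrix ι ι L}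
    (hg : IsUnit g.det) (h : g * coordProj L T = coordProj L T' * g) : T.card = T'.card := by
  have := congrArg Matrix.rank h
  rwa [Matrix.rank_mul_eq_right_of_isUnit_det _ _ hg, Matrix.rank_mul_eq_left_of_isUnit_det _ _ hg,
    rank_coordProj, rank_coordProj] at this

/-- Idempotent matrices over a principal ideal domain are conjugate to coordinate projections. -/
theorem exists_conj_coordProj_of_isPrincipalIdealRing {S : Type*} [CommRing S] [IsDomain S]
    [IsPrincipalIdealRing S] {e : Matrix ι ι S} (he : e * e = e) :
    ∃ (W : Matrix ι ι S) (T : Finset ι), IsUnit W.det ∧ W * e = coordProj S T * W := by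
  set f : (ι → S) →ₗ[S] (ι → S) := Matrix.toLin' e with hf
  have hfi : IsIdempotentElem f := by
    rw [IsIdempotentElem, hf, Module.End.mul_eq_comp, ← Matrix.toLin'_mul, he]
  have hc : IsCompl (LinearMap.range f) (LinearMap.ker f) := LinearMap.IsIdempotentElem.isCompl hfi
  let b₁ := Module.Free.chooseBasis S (LinearMap.range f)
  let b₂ := Module.Free.chooseBasis S (LinearMap.ker f)
  let b₀ := (b₁.prod b₂).map (Submodule.prodEquivOfIsCompl _ _ hc)
  let eqv := b₀.indexEquiv (Pi.basisFun S ι)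
  let b := b₀.reindex eqv
  have hb : ∀ i, f (b i) = if (eqv.symm i).isLeft then b i else 0 := by
    intro i
    rcases h : eqv.symm i with j | j
    · have hbi : b i = b₁ j := by simp [b, b₀, h]
      simp only [Sum.isLeft_inl, if_true, hbi]
      exact (LinearMap.IsIdempotentElem.mem_range_iff hfi).1 (b₁ j).2
    · have hbi : b i = b₂ j := by simp [b, b₀, h]
      simp [hbi]
  let T : Finset ι := Finset.univ.filter fun i => (eqv.symm i).isLeft
  let P := (Pi.basisFun S ι).toMatrix b
  let W := b.toMatrix (Pi.basisFun S ι)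
  have hWP : W * P = 1 := Module.Basis.toMatrix_mul_toMatrix_flip _ _
  have hPW : P * W = 1 := Module.Basis.toMatrix_mul_toMatrix_flip _ _
  have heP : e * P = P * coordProj S T := by
    ext i j
    rw [mul_coordProj_apply]
    have := congrFun (hb j) i
    rw [show f (b j) = e.mulVec (b j) from Matrix.toLin'_apply e (b j)] at this
    have hP : ∀ i j, P i j = b j i := fun i j => by simp [P, Module.Basis.toMatrix_apply]
    rw [Matrix.mul_apply]
    simp only [hP]
    rw [Matrix.mulVec, dotProduct] at this
    rw [this]
    simp only [T, Finset.mem_filter, Finset.mem_univ, true_and]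
    split_ifs <;> rfl
  refine ⟨W, T, ?_, ?_⟩
  · exact IsUnit.of_mul_eq_one P.det (by rw [← Matrix.det_mul, hWP, Matrix.det_one])
  · calc W * e = W * (e * P) * W := by rw [Matrix.mul_assoc, Matrix.mul_assoc, hPW, Matrix.mul_one]
      _ = coordProj S T * W := by rw [heP, ← Matrix.mul_assoc, hWP, Matrix.one_mul]

end Idempotents

section Lifting

variable {ι : Type*} [DecidableEq ι] [Fintype ι] {B L : Type*} [CommRing B] [Field L]

theorem exists_isUnit_det_lift (ψ : B →+* L) (hψ : ∀ x : L, x ≠ 0 → ∃ u, IsUnit u ∧ ψ u = x)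
    (g : Matrix ι ι L) (hg : IsUnit g.det) :
    ∃ G : Matrix ι ι B, IsUnit G.det ∧ G.map ψ = g := by
  have hsurj : ∀ x : L, ∃ b, ψ b = x := fun x => by
    by_cases hx : x = 0
    · exact ⟨0, by simp [hx]⟩
    · exact (hψ x hx).imp fun _ h => h.2
  refine Matrix.diagonal_transvection_induction_of_det_ne_zero
    (fun g => ∃ G : Matrix ι ι B, IsUnit G.det ∧ G.map ψ = g) g hg.ne_zero ?_ ?_ ?_
  · intro D hD
    rw [Matrix.det_diagonal, Finset.prod_ne_zero_iff] at hD
    choose u hu hψu using fun i => hψ (D i) (hD i (Finset.mem_univ i))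
    refine ⟨Matrix.diagonal u, ?_, ?_⟩
    · rw [Matrix.det_diagonal]
      exact (IsUnit.prod_univ_iff).2 hu
    · rw [Matrix.diagonal_map (map_zero ψ)]
      congr 1
      ext i
      exact hψu i
  · intro t
    obtain ⟨c, hc⟩ := hsurj t.c
    refine ⟨Matrix.transvection t.i t.j c, ?_, ?_⟩
    · rw [Matrix.det_transvection_of_ne _ _ t.hij]
      exact isUnit_one
    · rw [Matrix.TransvectionStruct.toMatrix, Matrix.transvection, Matrix.transvection,
        Matrix.map_add _ (map_add ψ), Matrix.map_single, hc,
        Matrix.map_one _ (map_zero ψ) (map_one ψ)]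
  · rintro _ _ - - ⟨G, hG, rfl⟩ ⟨G', hG', rfl⟩
    refine ⟨G * G', ?_, Matrix.map_mul⟩
    rw [Matrix.det_mul]
    exact hG.mul hG'

theorem exists_isUnit_det_lift_commuting (ψ : B →+* L)
    (hψ : ∀ x : L, x ≠ 0 → ∃ u, IsUnit u ∧ ψ u = x) (T : Finset ι)
    (g : Matrix ι ι L) (hg : IsUnit g.det) (hgT : g * coordProj L T = coordProj L T * g) :
    ∃ G : Matrix ι ι B, IsUnit G.det ∧ G.map ψ = g ∧
      G * coordProj B T = coordProj B T * G := by
  have hz : ∀ i j, ¬ (i ∈ T ↔ j ∈ T) → g i j = 0 := fun i j hij => by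
    have := congrFun (congrFun hgT i) j
    rw [mul_coordProj_apply, coordProj_mul_apply] at this
    by_cases hi : i ∈ T <;> by_cases hj : j ∈ T <;> simp_all
  let eqv := Equiv.sumCompl (· ∈ T)
  let g' := g.submatrix eqv eqv
  have hg' : g' = Matrix.fromBlocks g'.toBlocks₁₁ 0 0 g'.toBlocks₂₂ := by
    conv_lhs => rw [← Matrix.fromBlocks_toBlocks g']
    congr 1
    · ext ⟨i, hi⟩ ⟨j, hj⟩
      exact hz i j (by simp [hi, hj])
    · ext ⟨i, hi⟩ ⟨j, hj⟩
      exact hz i j (by simp [hi, hj])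
  have hdet : IsUnit g'.det := by rwa [Matrix.det_submatrix_equiv_self]
  rw [hg', Matrix.det_fromBlocks_zero₂₁, IsUnit.mul_iff] at hdet
  obtain ⟨G₁, hG₁, h₁⟩ := exists_isUnit_det_lift ψ hψ _ hdet.1
  obtain ⟨G₂, hG₂, h₂⟩ := exists_isUnit_det_lift ψ hψ _ hdet.2
  refine ⟨(Matrix.fromBlocks G₁ 0 0 G₂).submatrix eqv.symm eqv.symm, ?_, ?_, ?_⟩
  · rw [Matrix.det_submatrix_equiv_self, Matrix.det_fromBlocks_zero₂₁]
    exact hG₁.mul hG₂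
  · rw [← Matrix.submatrix_map, Matrix.fromBlocks_map, h₁, h₂, Matrix.map_zero _ (map_zero ψ),
      Matrix.map_zero _ (map_zero ψ), ← hg']
    simp [g']
  · ext i j
    rw [mul_coordProj_apply, coordProj_mul_apply]
    by_cases hi : i ∈ T <;> by_cases hj : j ∈ T <;>
      simp [hi, hj, eqv, Equiv.sumCompl_symm_apply_of_pos, Equiv.sumCompl_symm_apply_of_neg]

end Lifting

section LocalStep

variable {R : Type*} [CommRing R] [IsLocalRing R]

theorem mem_map_C_maximalIdeal_iff {g : R[X]} :
    g ∈ (IsLocalRing.maximalIdeal R).map C ↔ mapRingHom (IsLocalRing.residue R) g = 0 :=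
  mem_map_C_iff_map_eq_zero

variable (B : Type*) [CommRing B] [Algebra R[X] B] [IsLocalization (monicSubmonoid R) B]

variable (R) in
/-- Reduction modulo the maximal ideal, from fractions with monic denominator to rational functions
over the residue field. -/
noncomputable def residueLift : B →+* FractionRing (IsLocalRing.ResidueField R)[X] :=
  IsLocalization.lift (M := monicSubmonoid R)
    (g := (algebraMap (IsLocalRing.ResidueField R)[X] (FractionRing _)).comp
      (mapRingHom (IsLocalRing.residue R))) fun f => by
    rw [isUnit_iff_ne_zero, RingHom.comp_apply, Ne,
      FaithfulSMul.algebraMap_eq_zero_iff, coe_mapRingHom]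
    exact (Polynomial.Monic.map _ (mem_monicSubmonoid.1 f.2)).ne_zero

theorem residueLift_algebraMap (f : R[X]) : residueLift R B (algebraMap R[X] B f) =
    algebraMap _ _ (mapRingHom (IsLocalRing.residue R) f) := by
  rw [residueLift, IsLocalization.lift_eq, RingHom.comp_apply]

variable {B}

theorem isUnit_algebraMap_of_isUnit_leadingCoeff {f : R[X]} (hf : IsUnit f.leadingCoeff) :
    IsUnit (algebraMap R[X] B f) := by
  obtain ⟨u, hu⟩ := hf.exists_left_inv
  have hmon : (C u * f).Monic := by
    rw [Polynomial.Monic, Polynomial.leadingCoeff_C_mul_of_isUnit, hu]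
    exact IsUnit.of_mul_eq_one _ hu
  have := isUnit_algebraMap_monic (B := B) hmon
  rw [map_mul] at this
  exact isUnit_of_mul_isUnit_right this

theorem exists_isUnit_residueLift_eq (x : FractionRing (IsLocalRing.ResidueField R)[X])
    (hx : x ≠ 0) : ∃ u : B, IsUnit u ∧ residueLift R B u = x := by
  have key : ∀ g : (IsLocalRing.ResidueField R)[X], g ≠ 0 →
      ∃ u : B, IsUnit u ∧ residueLift R B u = algebraMap _ _ g := fun g hg => by
    obtain ⟨f, rfl, hd⟩ := Polynomial.exists_degree_eq_of_mem_lifts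
      (Polynomial.mem_lifts_of_surjective (IsLocalRing.residue_surjective (R := R)) g)
    refine ⟨algebraMap R[X] B f, isUnit_algebraMap_of_isUnit_leadingCoeff ?_,
      residueLift_algebraMap B f⟩
    by_contra hu
    have h0 := (IsLocalRing.residue_eq_zero_iff _).2 ((IsLocalRing.mem_maximalIdeal _).2 hu)
    have hcoeff := congrArg (fun d => (map (IsLocalRing.residue R) f).coeff d)
      (Polynomial.natDegree_eq_of_degree_eq hd)
    simp only [Polynomial.coeff_map] at hcoeff
    rw [Polynomial.coeff_natDegree, h0, ← Polynomial.coeff_map, Polynomial.coeff_natDegree,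
      eq_comm, Polynomial.leadingCoeff_eq_zero] at hcoeff
    exact hg hcoeff
  obtain ⟨a, b, hb, rfl⟩ := IsFractionRing.div_surjective (A := (IsLocalRing.ResidueField R)[X]) x
  have hb0 : b ≠ 0 := nonZeroDivisors.ne_zero hb
  have ha0 : a ≠ 0 := by rintro rfl; simp at hx
  obtain ⟨u, hu, hua⟩ := key a ha0
  obtain ⟨v, hv, hvb⟩ := key b hb0
  refine ⟨u * hv.unit⁻¹, hu.mul (Units.isUnit _), ?_⟩
  rw [map_mul, hua, div_eq_mul_inv]
  congr 1
  refine eq_inv_of_mul_eq_one_left ?_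
  rw [← hvb, ← map_mul, IsUnit.val_inv_mul, map_one]

theorem mem_map_of_residueLift_eq_zero [Algebra R B] [IsScalarTower R R[X] B] {b : B}
    (h : residueLift R B b = 0) : b ∈ (IsLocalRing.maximalIdeal R).map (algebraMap R B) := by
  obtain ⟨f, g, hf, hfg⟩ := exists_monic_mul_eq (R := R) b
  have h1 := congrArg (residueLift R B) hfg
  rw [map_mul, h, mul_zero, residueLift_algebraMap, eq_comm,
    FaithfulSMul.algebraMap_eq_zero_iff] at h1
  have h2 := Ideal.mem_map_of_mem (algebraMap R[X] B) (mem_map_C_maximalIdeal_iff.2 h1)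
  rw [← hfg, Ideal.map_map, ← Polynomial.algebraMap_eq, ← IsScalarTower.algebraMap_eq] at h2
  exact (Ideal.unit_mul_mem_iff_mem _ (isUnit_algebraMap_monic hf)).1 h2

theorem MCong.eq_of_zero {A ι κ : Type*} [CommRing A] {X Y : Matrix ι κ A} (h : MCong 0 X Y) :
    X = Y := by
  ext i j
  simpa [sub_eq_zero] using h i j

variable {ι : Type*} [DecidableEq ι] [Fintype ι]

/-- Over a domain of the form `κ[X]`, normal forms of an idempotent can be chosen compatibly with a
normal form over the fraction field. -/
theorem exists_conj_coordProj_of_conj_fractionRing {S L : Type*} [CommRing S] [IsDomain S]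
    [IsPrincipalIdealRing S] [Field L] [Algebra S L] {e : Matrix ι ι S} (he : e * e = e)
    {V : Matrix ι ι L} (hV : IsUnit V.det) {T : Finset ι}
    (hVe : V * e.map (algebraMap S L) = coordProj L T * V) :
    ∃ P : Matrix ι ι S, IsUnit P.det ∧ P * e = coordProj S T * P := by
  obtain ⟨P, T', hP, hPe⟩ := exists_conj_coordProj_of_isPrincipalIdealRing he
  have hPL : IsUnit (P.map (algebraMap S L)).det := by
    rw [← RingHom.mapMatrix_apply, ← RingHom.map_det]
    exact hP.map _
  have hPLe : P.map (algebraMap S L) * e.map (algebraMap S L) =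
      coordProj L T' * P.map (algebraMap S L) := by
    rw [← Matrix.map_mul, hPe, Matrix.map_mul, coordProj_map]
  have hcard : T.card = T'.card := by
    refine card_eq_of_mul_coordProj (g := P.map (algebraMap S L) * V⁻¹) ?_ ?_
    · rw [Matrix.det_mul]
      exact hPL.mul (Matrix.isUnit_nonsing_inv_det V hV)
    · calc P.map (algebraMap S L) * V⁻¹ * coordProj L T
          = P.map (algebraMap S L) * V⁻¹ * (coordProj L T * V) * V⁻¹ := by
            rw [Matrix.mul_assoc _ _ V⁻¹, Matrix.mul_assoc _ V, Matrix.mul_nonsing_inv V hV,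
              Matrix.mul_one]
        _ = P.map (algebraMap S L) * (V⁻¹ * V) * e.map (algebraMap S L) * V⁻¹ := by
            rw [← hVe]
            simp only [Matrix.mul_assoc]
        _ = coordProj L T' * (P.map (algebraMap S L) * V⁻¹) := by
            rw [Matrix.nonsing_inv_mul V hV, Matrix.mul_one, hPLe, Matrix.mul_assoc]
  obtain ⟨σ, hσ⟩ := exists_perm_mem_iff hcard
  exact ⟨_, isUnit_det_submatrix_perm σ hP,
    (submatrix_perm_mul_cong (p := 0) hσ (MCong.of_eq hPe)).eq_of_zero⟩

variable [Algebra R B] [IsScalarTower R R[X] B] {p : R} {e : Matrix ι ι R[X]}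

variable (B) in
/-- A normal form over fractions with monic denominator may be chosen to be polynomial modulo the
maximal ideal. -/
theorem exists_conj_residueLift_eq (hp : p ∈ IsLocalRing.maximalIdeal R)
    (he : MCong (C p) (e * e) e)
    (hU : Diagonalizable (algebraMap R[X] B (C p)) (e.map (algebraMap R[X] B))) :
    ∃ (D : Matrix ι ι B) (T : Finset ι) (P : Matrix ι ι (IsLocalRing.ResidueField R)[X]),
      IsUnit D.det ∧ IsUnit P.det ∧
      MCong (algebraMap R[X] B (C p)) (D * e.map (algebraMap R[X] B)) (coordProj B T * D) ∧
      P * e.map (mapRingHom (IsLocalRing.residue R)) =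
        coordProj _ T * P ∧
      D.map (residueLift R B) = P.map (algebraMap _ _) := by
  obtain ⟨U, T, hU, hUe⟩ := hU
  have hp0 : mapRingHom (IsLocalRing.residue R) (C p) = 0 :=
    mem_map_C_maximalIdeal_iff.1 (Ideal.mem_map_of_mem C hp)
  have he' := he.map (mapRingHom (IsLocalRing.residue R))
  rw [hp0, Matrix.map_mul] at he'
  have hV : IsUnit (U.map (residueLift R B)).det := by
    rw [← RingHom.mapMatrix_apply, ← RingHom.map_det]
    exact hU.map _
  have hem : (e.map (algebraMap R[X] B)).map (residueLift R B) =
      (e.map (mapRingHom (IsLocalRing.residue R))).map (algebraMap _ (FractionRing _)) := by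
    ext i j
    simp only [Matrix.map_apply, residueLift_algebraMap]
  have hVe := hUe.map (residueLift R B)
  rw [residueLift_algebraMap, hp0, map_zero, Matrix.map_mul, Matrix.map_mul, coordProj_map,
    hem] at hVe
  obtain ⟨P, hP, hPe⟩ := exists_conj_coordProj_of_conj_fractionRing he'.eq_of_zero hV
    hVe.eq_of_zero
  set V := U.map (residueLift R B)
  set PL := P.map (algebraMap _ (FractionRing (IsLocalRing.ResidueField R)[X])) with hPLdef
  have hPL : IsUnit PL.det := by
    rw [hPLdef, ← RingHom.mapMatrix_apply, ← RingHom.map_det]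
    exact hP.map _
  obtain ⟨G, hG, hGψ, hGT⟩ := exists_isUnit_det_lift_commuting (residueLift R B)
    exists_isUnit_residueLift_eq T (PL * V⁻¹)
    (by rw [Matrix.det_mul]; exact hPL.mul (Matrix.isUnit_nonsing_inv_det V hV)) (by
      calc PL * V⁻¹ * coordProj _ T
          = PL * V⁻¹ * (coordProj _ T * V) * V⁻¹ := by
            rw [Matrix.mul_assoc _ _ V⁻¹, Matrix.mul_assoc _ V, Matrix.mul_nonsing_inv V hV,
              Matrix.mul_one]
        _ = PL * (V⁻¹ * V) *
            (e.map (mapRingHom (IsLocalRing.residue R))).map (algebraMap _ _) * V⁻¹ := by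
            rw [← hVe.eq_of_zero]
            simp only [Matrix.mul_assoc]
        _ = coordProj _ T * (PL * V⁻¹) := by
            rw [Matrix.nonsing_inv_mul V hV, Matrix.mul_one, hPLdef, ← Matrix.map_mul, hPe,
              Matrix.map_mul, coordProj_map, Matrix.mul_assoc])
  refine ⟨G * U, T, P, ?_, hP, ?_, hPe, ?_⟩
  · rw [Matrix.det_mul]
    exact hG.mul hU
  · rw [Matrix.mul_assoc, ← Matrix.mul_assoc (coordProj B T), ← hGT, Matrix.mul_assoc]
    exact hUe.mul_left G
  · rw [Matrix.map_mul, hGψ, Matrix.mul_assoc, Matrix.nonsing_inv_mul V hV, Matrix.mul_one]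

variable (B) in
/-- Horrocks' theorem for idempotents modulo `p`: a normal form over fractions with monic
denominator yields one over polynomials. -/
theorem diagonalizable_of_monicLocalization [IsNoetherianRing R]
    (hp : p ∈ IsLocalRing.maximalIdeal R) (he : MCong (C p) (e * e) e)
    (hU : Diagonalizable (algebraMap R[X] B (C p)) (e.map (algebraMap R[X] B))) :
    Diagonalizable (C p) e := by
  obtain ⟨D, T, P, hD, hP, hDe, hPe, hDP⟩ := exists_conj_residueLift_eq B hp he hU
  have hp0 : mapRingHom (IsLocalRing.residue R) (C p) = 0 :=
    mem_map_C_maximalIdeal_iff.1 (Ideal.mem_map_of_mem C hp)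
  have hsurj : Function.Surjective (mapRingHom (IsLocalRing.residue R)) :=
    Polynomial.map_surjective _ IsLocalRing.residue_surjective
  choose lift hlift using hsurj
  let Q : Matrix ι ι R[X] := P.map lift
  have hQ : Q.map (mapRingHom (IsLocalRing.residue R)) = P := by
    ext i j : 2
    simp only [Q, Matrix.map_apply, hlift]
  let E := coordProj R[X] T
  let q := E * Q * e + (1 - E) * Q * (1 - e)
  have hE : E * E = E := coordProj_mul_self T
  have hq : MCong (C p) (q * e) (E * q) := by
    have h1 : q * e = E * Q * (e * e) + (1 - E) * Q * (e - e * e) := by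
      simp only [q]; noncomm_ring
    have h2 : E * q = E * Q * e + (1 - E) * Q * (e - e) := by
      have : E * q = E * E * Q * e + (E - E * E) * Q * (1 - e) := by simp only [q]; noncomm_ring
      rw [this, hE]; simp
    rw [h1, h2]
    exact (he.mul_left _).add (((MCong.refl e).sub he).mul_left _)
  have hqP : q.map (mapRingHom (IsLocalRing.residue R)) = P := by
    have hE' : (mapRingHom (IsLocalRing.residue R)).mapMatrix E = coordProj _ T := coordProj_map T _
    have hQ' : (mapRingHom (IsLocalRing.residue R)).mapMatrix Q = P := hQ
    have hEE : coordProj (IsLocalRing.ResidueField R)[X] T * coordProj _ T = coordProj _ T :=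
      coordProj_mul_self T
    rw [← RingHom.mapMatrix_apply]
    simp only [q, map_add, map_mul, map_sub, map_one, hE', hQ']
    have hEP : coordProj _ T * (coordProj _ T * P) = coordProj _ T * P := by
      rw [← Matrix.mul_assoc, hEE]
    rw [Matrix.mul_assoc, Matrix.mul_assoc, mul_sub, mul_one, RingHom.mapMatrix_apply, hPe,
      sub_mul, one_mul, mul_sub, hEP]
    abel
  set φ := algebraMap R[X] B
  have hDDi : D * D⁻¹ = 1 := Matrix.mul_nonsing_inv D hD
  have hDiD : D⁻¹ * D = 1 := Matrix.nonsing_inv_mul D hD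
  have hx : q.map φ * D⁻¹ - 1 ∈ blockMatrices (IsLocalRing.maximalIdeal R) p T B := by
    have hx0 : ∀ a b, (q.map φ * D⁻¹ - 1) a b ∈
        (IsLocalRing.maximalIdeal R).map (algebraMap R B) := fun a b => by
      apply mem_map_of_residueLift_eq_zero
      have h1 : (q.map φ).map (residueLift R B) = D.map (residueLift R B) := by
        rw [hDP, ← hqP]
        ext i j
        simp only [Matrix.map_apply, φ, residueLift_algebraMap]
      have h2 : (residueLift R B).mapMatrix (q.map φ * D⁻¹ - 1) = 0 := by
        rw [map_sub, map_mul, map_one, RingHom.mapMatrix_apply, h1, ← RingHom.mapMatrix_apply,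
          ← map_mul, hDDi, map_one, sub_self]
      exact congrFun (congrFun h2 a) b
    have hxE : MCong (φ (C p)) ((q.map φ * D⁻¹ - 1) * coordProj B T)
        (coordProj B T * (q.map φ * D⁻¹ - 1)) := by
      rw [sub_mul, mul_sub, one_mul, mul_one]
      refine MCong.sub ?_ (MCong.refl _)
      have h1 : MCong (φ (C p)) (D⁻¹ * coordProj B T) (e.map φ * D⁻¹) := by
        have := (hDe.symm.mul_left D⁻¹).mul_right D⁻¹
        rwa [← Matrix.mul_assoc D⁻¹ D, hDiD, one_mul, Matrix.mul_assoc, Matrix.mul_assoc, hDDi,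
          mul_one] at this
      have h2 := hq.map φ
      rw [Matrix.map_mul, Matrix.map_mul, coordProj_map] at h2
      rw [Matrix.mul_assoc]
      refine (h1.mul_left _).trans ?_
      rw [← Matrix.mul_assoc, ← Matrix.mul_assoc]
      exact h2.mul_right _
    intro a b
    by_cases hab : (a ∈ T ↔ b ∈ T)
    · rw [blockIdeal, if_pos hab]
      exact hx0 a b
    · rw [blockIdeal, if_neg hab, Ideal.map_span, Set.image_singleton, Ideal.mem_span_singleton,
        IsScalarTower.algebraMap_apply R R[X] B, Polynomial.algebraMap_eq]
      have := hxE a b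
      rw [mul_coordProj_apply, coordProj_mul_apply] at this
      by_cases ha : a ∈ T
      · rw [if_neg fun hb => hab ⟨fun _ => hb, fun _ => ha⟩, if_pos ha, zero_sub, dvd_neg] at this
        exact this
      · rw [if_pos (by tauto), if_neg ha, sub_zero] at this
        exact this
  obtain ⟨Y, hY, o, ho, ho', hqY⟩ := exists_block_decomposition hp hDDi hDe hq hx
  have hY0 : (mapRingHom (IsLocalRing.residue R)).mapMatrix Y = 0 := by
    refine Matrix.ext fun a b => ?_
    exact mem_map_C_maximalIdeal_iff.1 (hY.2 a b)
  refine ⟨q - Y, T, ?_, ?_⟩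
  · refine isUnit_det_of_mul_eq_one_add (B := B) (Di := D⁻¹) (o := o) ?_ ho'
      (fun a b => Ideal.map_mono (blockIdeal_le hp a b) (ho a b)) ?_
    · rw [Matrix.map_sub _ (map_sub _), sub_mul, hqY, add_sub_cancel_left]
    · obtain ⟨v, hv⟩ := hP.exists_right_inv
      refine ⟨lift v, mem_map_C_maximalIdeal_iff.2 ?_⟩
      rw [map_sub, map_mul, hlift, map_one, RingHom.map_det, map_sub, hY0, sub_zero,
        RingHom.mapMatrix_apply, hqP, hv, sub_self]
  · rw [sub_mul, mul_sub]
    exact hq.sub hY.1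

end LocalStep

section Patching


universe u

variable {R : Type u} [CommRing R] {ι : Type*} [DecidableEq ι] [Fintype ι]

/-- Quillen's patching ideal: those `a` for which `e(s)` and `e(s + a t)` are universally conjugate
modulo `p`. -/
def patchingIdeal (p : R) (e : Matrix ι ι R[X]) : Ideal R where
  carrier := {a | ∀ (S : Type u) [CommRing S] [Algebra R S] (s t : S), ∃ W : Matrix ι ι S,
    IsUnit W.det ∧ MCong (algebraMap R S p) (e.map (aeval s) * W) (W * e.map (aeval (s + a • t)))}
  zero_mem' := fun S _ _ s t => ⟨1, by simp, MCong.of_eq (by simp)⟩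
  add_mem' := fun {a b} ha hb S _ _ s t => by
    obtain ⟨W, hW, h⟩ := ha S s t
    obtain ⟨W', hW', h'⟩ := hb S (s + a • t) t
    refine ⟨W * W', by rw [Matrix.det_mul]; exact hW.mul hW', ?_⟩
    rw [add_smul, ← add_assoc, ← Matrix.mul_assoc]
    refine (h.mul_right W').trans ?_
    rw [Matrix.mul_assoc, Matrix.mul_assoc]
    exact h'.mul_left W
  smul_mem' := fun r a ha S _ _ s t => by
    obtain ⟨W, hW, h⟩ := ha S s (r • t)
    refine ⟨W, hW, ?_⟩
    rwa [smul_smul, mul_comm a r] at h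

theorem exists_smul_comp_mem_lifts (M : Submonoid R) (Rm : Type*) [CommRing Rm] [Algebra R Rm]
    [IsLocalization M Rm] {κ : Type*} [Fintype κ] (F : κ → Rm[X][X])
    (hF : ∀ k, (F k).coeff 0 ∈ (mapRingHom (algebraMap R Rm)).range) :
    ∃ b ∈ M, ∀ k, ∃ G : R[X][X], mapRingHom (mapRingHom (algebraMap R Rm)) G =
      (F k).comp (C (C (algebraMap R Rm b)) * X) := by
  classical
  let _ : Algebra R[X] Rm[X] := (mapRingHom (algebraMap R Rm)).toAlgebra
  have : IsLocalization (M.map C) Rm[X] := Polynomial.isLocalization M Rm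
  obtain ⟨⟨_, b, hb, rfl⟩, h⟩ := IsLocalization.exist_integer_multiples_of_finset (M.map C)
    (Finset.univ.biUnion fun k => (F k).support.image fun i => (F k).coeff i)
  refine ⟨b, hb, fun k => ?_⟩
  have hl : (F k).comp (C (C (algebraMap R Rm b)) * X) ∈
      Polynomial.lifts (mapRingHom (algebraMap R Rm)) := by
    rw [Polynomial.lifts_iff_coeff_lifts]
    intro i
    rw [Polynomial.comp_C_mul_X_coeff]
    rcases i with _ | i
    · simpa using hF k
    · by_cases hi : (F k).coeff (i + 1) = 0
      · exact ⟨0, by simp [hi]⟩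
      · obtain ⟨g, hg⟩ := h ((F k).coeff (i + 1)) (Finset.mem_biUnion.2 ⟨k, Finset.mem_univ k,
          Finset.mem_image_of_mem _ (Polynomial.mem_support_iff.2 hi)⟩)
        have hg' : mapRingHom (algebraMap R Rm) g =
            C (algebraMap R Rm b) * (F k).coeff (i + 1) := by
          rw [Algebra.smul_def] at hg
          refine hg.trans ?_
          congr 1
          exact Polynomial.map_C _
        refine ⟨C b ^ i * g, ?_⟩
        rw [map_mul, hg', map_pow, coe_mapRingHom, Polynomial.map_C]
        ring
  obtain ⟨G, hG⟩ := hl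
  exact ⟨G, hG⟩

variable {A A' : Type*} [CommRing A] [CommRing A']

theorem map_map_ringHom {κ : Type*} (f : A →+* A') {A'' : Type*} [CommRing A''] (g : A' →+* A'')
    (X : Matrix ι κ A) : (X.map f).map g = X.map (g.comp f) := rfl

/-- A normal form over a localization puts some denominator in the patching ideal. -/
theorem exists_mem_patchingIdeal (M : Submonoid R) (hM : M ≤ nonZeroDivisors R)
    (Rm : Type*) [CommRing Rm] [Algebra R Rm]
    [IsLocalization M Rm] (p : R) (e : Matrix ι ι R[X])
    (h : Diagonalizable (C (algebraMap R Rm p)) (e.map (mapRingHom (algebraMap R Rm)))) :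
    ∃ b ∈ M, b ∈ patchingIdeal p e := by
  obtain ⟨W, T, hW, hWe⟩ := h
  set j := mapRingHom (algebraMap R Rm)
  have hinj : Function.Injective (algebraMap R Rm) := IsLocalization.injective Rm hM
  have hj : Function.Injective j := Polynomial.map_injective _ hinj
  have hJ : Function.Injective (mapRingHom j) := Polynomial.map_injective _ hj
  have hWW : W * W⁻¹ = 1 := Matrix.mul_nonsing_inv W hW
  have hWW' : W⁻¹ * W = 1 := Matrix.nonsing_inv_mul W hW
  let α : Rm[X] →+* Rm[X][X] := C
  let β : Rm[X] →+* Rm[X][X] := eval₂RingHom (C.comp C) (C X + X)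
  let ε : Rm[X][X] →+* Rm[X] := evalRingHom 0
  have hεα : ε.comp α = RingHom.id _ := by
    ext <;> simp [ε, α]
  have hεβ : ε.comp β = RingHom.id _ := by
    ext <;> simp [ε, β]
  let Θ := α.mapMatrix W⁻¹ * β.mapMatrix W
  let Θi := β.mapMatrix W⁻¹ * α.mapMatrix W
  have hα1 : α.mapMatrix W * α.mapMatrix W⁻¹ = 1 := by rw [← map_mul, hWW, map_one]
  have hα2 : α.mapMatrix W⁻¹ * α.mapMatrix W = 1 := by rw [← map_mul, hWW', map_one]
  have hβ1 : β.mapMatrix W * β.mapMatrix W⁻¹ = 1 := by rw [← map_mul, hWW, map_one]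
  have hΘΘi : Θ * Θi = 1 := by
    simp only [Θ, Θi]
    rw [mul_assoc, ← mul_assoc (β.mapMatrix W), hβ1, one_mul, hα2]
  have hpp : MCong (C (C (algebraMap R Rm p))) (α.mapMatrix (e.map j) * Θ)
      (Θ * β.mapMatrix (e.map j)) := by
    have h1 := hWe.map α
    have h2 := hWe.map β
    have hβp : β (C (algebraMap R Rm p)) = C (C (algebraMap R Rm p)) := by simp [β]
    rw [hβp] at h2
    rw [Matrix.map_mul, Matrix.map_mul, coordProj_map] at h1 h2
    change MCong (C (C (algebraMap R Rm p))) (α.mapMatrix W * α.mapMatrix (e.map j))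
      (coordProj _ T * α.mapMatrix W) at h1
    change MCong _ (β.mapMatrix W * β.mapMatrix (e.map j)) (coordProj _ T * β.mapMatrix W) at h2
    have h3 : MCong (C (C (algebraMap R Rm p))) (α.mapMatrix (e.map j) * α.mapMatrix W⁻¹)
        (α.mapMatrix W⁻¹ * coordProj _ T) := by
      have := (h1.mul_left (α.mapMatrix W⁻¹)).mul_right (α.mapMatrix W⁻¹)
      rwa [← mul_assoc, hα2, one_mul, mul_assoc _ _ (α.mapMatrix W⁻¹),
        mul_assoc _ _ (α.mapMatrix W⁻¹), hα1,
        mul_one] at this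
    simp only [Θ]
    rw [← mul_assoc]
    refine (h3.mul_right _).trans ?_
    rw [mul_assoc, mul_assoc]
    exact h2.symm.mul_left _
  obtain ⟨Ψ₀, hΨ₀⟩ := MCong.iff_exists.1 hpp
  have hΘ0 : ε.mapMatrix Θ = 1 := by
    simp only [Θ, map_mul, RingHom.mapMatrix_apply, map_map_ringHom, hεα, hεβ]
    simpa using hWW'
  have hΘi0 : ε.mapMatrix Θi = 1 := by
    simp only [Θi, map_mul, RingHom.mapMatrix_apply, map_map_ringHom, hεα, hεβ]
    simpa using hWW'
  let Ψ := Ψ₀ - (ε.mapMatrix Ψ₀).map C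
  have hΨ0 : ε.mapMatrix Ψ = 0 := by
    ext a b : 2
    simp [Ψ, ε]
  have hΨ : α.mapMatrix (e.map j) * Θ = Θ * β.mapMatrix (e.map j) +
      C (C (algebraMap R Rm p)) • Ψ := by
    have h0 : C (algebraMap R Rm p) • ε.mapMatrix Ψ₀ = 0 := by
      have := congrArg ε.mapMatrix hΨ₀
      have hA : ε.mapMatrix (α.mapMatrix (e.map j)) = e.map j := by
        rw [RingHom.mapMatrix_apply, RingHom.mapMatrix_apply, map_map_ringHom, hεα]
        rfl
      have hB : ε.mapMatrix (β.mapMatrix (e.map j)) = e.map j := by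
        rw [RingHom.mapMatrix_apply, RingHom.mapMatrix_apply, map_map_ringHom, hεβ]
        rfl
      rw [map_add, map_mul _ _ Θ, map_mul _ Θ, hΘ0, mul_one, one_mul, hA, hB, left_eq_add] at this
      ext1 a b
      have := congrFun (congrFun this a) b
      simpa [ε] using this
    have h1 : C (C (algebraMap R Rm p)) • (ε.mapMatrix Ψ₀).map C = 0 := by
      ext1 a b
      have := congrArg C (congrFun (congrFun h0 a) b)
      simpa using this
    rw [hΨ₀, smul_sub, h1, sub_zero]
  obtain ⟨b, hb, hlift⟩ := exists_smul_comp_mem_lifts M Rm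
    (fun k : Fin 3 × ι × ι => (![Θ, Θi, Ψ] k.1) k.2.1 k.2.2) (by
      rintro ⟨k, x, y⟩
      have hcoeff : ∀ f : Rm[X][X], f.coeff 0 = ε f := fun f => Polynomial.coeff_zero_eq_eval_zero f
      rw [hcoeff]
      have hone : (1 : Matrix ι ι Rm[X]) x y ∈ j.range := by
        rw [Matrix.one_apply]
        split_ifs
        exacts [one_mem _, zero_mem _]
      fin_cases k
      · have := congrFun (congrFun hΘ0 x) y
        rw [← this] at hone
        exact hone
      · have := congrFun (congrFun hΘi0 x) y
        rw [← this] at hone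
        exact hone
      · have := congrFun (congrFun hΨ0 x) y
        exact ⟨0, by rw [map_zero]; exact this.symm⟩)
  refine ⟨b, hb, ?_⟩
  choose G hG using hlift
  let γ : Rm[X][X] →+* Rm[X][X] := compRingHom (C (C (algebraMap R Rm b)) * X)
  let J := mapRingHom j
  let L : Fin 3 → Matrix ι ι R[X][X] := fun k => Matrix.of fun x y => G (k, x, y)
  have hL : ∀ k, J.mapMatrix (L k) = γ.mapMatrix (![Θ, Θi, Ψ] k) := fun k => by
    refine Matrix.ext fun x y => ?_
    exact hG (k, x, y)
  have hL0 : J.mapMatrix (L 0) = γ.mapMatrix Θ := hL 0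
  have hL1 : J.mapMatrix (L 1) = γ.mapMatrix Θi := hL 1
  have hL2 : J.mapMatrix (L 2) = γ.mapMatrix Ψ := hL 2
  have hJm : Function.Injective (J.mapMatrix : Matrix ι ι R[X][X] →+* _) := fun X Y hXY =>
    Matrix.ext fun x y => hJ (congrFun (congrFun hXY x) y)
  have hinv : L 0 * L 1 = 1 := hJm (by
    rw [map_mul, hL0, hL1, ← map_mul, hΘΘi, map_one, map_one])
  let β₀ : R[X] →+* R[X][X] := eval₂RingHom (C.comp C) (C X + C (C b) * X)
  have hα : (γ.comp α).comp j = J.comp C := by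
    ext <;> simp [γ, α, J, j]
  have hβ : (γ.comp β).comp j = J.comp β₀ := by
    ext <;> simp [γ, β, β₀, J, j]
  have hrel : e.map C * L 0 = L 0 * e.map β₀ + C (C p) • L 2 := hJm (by
    have h1 : J.mapMatrix (e.map C) = γ.mapMatrix (α.mapMatrix (e.map j)) := by
      simp only [RingHom.mapMatrix_apply, map_map_ringHom, ← RingHom.comp_assoc, hα]
    have h2 : J.mapMatrix (e.map β₀) = γ.mapMatrix (β.mapMatrix (e.map j)) := by
      simp only [RingHom.mapMatrix_apply, map_map_ringHom, ← RingHom.comp_assoc, hβ]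
    have h3 : J.mapMatrix (C (C p) • L 2) = γ.mapMatrix (C (C (algebraMap R Rm p)) • Ψ) := by
      refine Matrix.ext fun x y => ?_
      have := congrFun (congrFun hL2 x) y
      simp only [RingHom.mapMatrix_apply, Matrix.map_apply, Matrix.smul_apply, smul_eq_mul,
        map_mul] at this ⊢
      rw [this]
      simp [J, j, γ]
    rw [map_add, map_mul, map_mul, h1, h2, h3, hL0, ← map_mul, hΨ, map_add, map_mul])
  intro S _ _ s t
  let ν : R[X][X] →+* S := eval₂RingHom (aeval s).toRingHom t
  have hν1 : ν.comp C = (aeval s : R[X] →ₐ[R] S).toRingHom := by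
    ext <;> simp [ν]
  have hν2 : ν.comp β₀ = (aeval (s + b • t) : R[X] →ₐ[R] S).toRingHom := by
    ext <;> simp [ν, β₀, Algebra.smul_def]
  refine ⟨ν.mapMatrix (L 0), ?_, ?_⟩
  · refine IsUnit.of_mul_eq_one (ν.mapMatrix (L 1)).det ?_
    rw [← Matrix.det_mul, ← map_mul, hinv, map_one, Matrix.det_one]
  · have hr : MCong (C (C p)) (e.map C * L 0) (L 0 * e.map β₀) := MCong.iff_exists.2 ⟨L 2, hrel⟩
    have := hr.map ν
    rw [Matrix.map_mul, Matrix.map_mul, map_map_ringHom, map_map_ringHom, hν1, hν2] at this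
    have hνp : ν (C (C p)) = algebraMap R S p := by simp [ν]
    rw [hνp] at this
    exact this

/-- Quillen patching for idempotents modulo `p`. -/
theorem exists_conj_eval_zero [IsDomain R] (p : R) (e : Matrix ι ι R[X])
    (h : ∀ (m : Ideal R) [m.IsMaximal], Diagonalizable (C (algebraMap R (Localization.AtPrime m) p))
      (e.map (mapRingHom (algebraMap R (Localization.AtPrime m))))) :
    ∃ W : Matrix ι ι R[X], IsUnit W.det ∧
      MCong (C p) (e * W) (W * (e.map (evalRingHom 0)).map C) := by
  have htop : patchingIdeal p e = ⊤ := by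
    by_contra hne
    obtain ⟨m, hm, hle⟩ := Ideal.exists_le_maximal _ hne
    obtain ⟨b, hb, hb'⟩ := exists_mem_patchingIdeal m.primeCompl
      (Ideal.primeCompl_le_nonZeroDivisors m) (Localization.AtPrime m) p e (h m)
    exact hb (hle hb')
  obtain ⟨W, hW, hWe⟩ := (htop ▸ Submodule.mem_top : (1 : R) ∈ patchingIdeal p e) R[X] X (-X)
  refine ⟨W, hW, ?_⟩
  have h1 : e.map (aeval (X : R[X])) = e := by
    ext1 a b
    simp
  have h2 : e.map (aeval ((X : R[X]) + (1 : R) • -X)) = (e.map (evalRingHom 0)).map C := by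
    ext1 a b
    rw [one_smul, add_neg_cancel, Matrix.map_apply, Matrix.map_apply, Matrix.map_apply,
      coe_evalRingHom, ← Polynomial.coeff_zero_eq_eval_zero, Polynomial.aeval_def,
      Polynomial.eval₂_at_zero]
    rfl
  rwa [h1, h2] at hWe

end Patching

section ResidueField


variable {A B ι : Type*} [CommRing A] [CommRing B] [DecidableEq ι] [Fintype ι]

theorem Diagonalizable.map {p : A} {e : Matrix ι ι A} (h : Diagonalizable p e) (f : A →+* B) :
    Diagonalizable (f p) (e.map f) := by
  obtain ⟨W, T, hW, hWe⟩ := h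
  refine ⟨W.map f, T, ?_, ?_⟩
  · rw [← RingHom.mapMatrix_apply, ← RingHom.map_det]
    exact hW.map f
  · have := hWe.map f
    rwa [Matrix.map_mul, Matrix.map_mul, coordProj_map] at this

theorem Diagonalizable.of_ringEquiv {p : A} {e : Matrix ι ι A} (f : A ≃+* B)
    (h : Diagonalizable (f p) (e.map f)) : Diagonalizable p e := by
  have := h.map (f.symm : B →+* A)
  have he : (e.map f).map (f.symm : B →+* A) = e := by
    ext1 i j
    simp
  rw [he] at this
  simpa using this

theorem diagonal_mul_transvection_mul_diagonal {L : Type*} [Field L] {d : ι → L}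
    (hd : ∀ i, d i ≠ 0) {i j : ι} (c : L) :
    Matrix.diagonal (fun a => (d a)⁻¹) * Matrix.transvection i j c * Matrix.diagonal d =
      Matrix.transvection i j ((d i)⁻¹ * c * d j) := by
  ext a b
  rw [Matrix.mul_diagonal, Matrix.diagonal_mul]
  simp only [Matrix.transvection, Matrix.add_apply, Matrix.one_apply, Matrix.single_apply]
  by_cases hab : a = b
  · subst hab
    by_cases hi : i = a ∧ j = a
    · obtain ⟨rfl, rfl⟩ := hi
      simp [mul_add, add_mul, hd]
    · simp [hi, hd]
  · by_cases hi : i = a ∧ j = b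
    · obtain ⟨rfl, rfl⟩ := hi
      simp [hab]
    · simp [hi, hab]

/-- Up to diagonal factors, every invertible matrix over a field lifts along a surjection. -/
theorem exists_diagonal_mul_lift {L : Type*} [Field L] (ψ : A →+* L)
    (hψ : Function.Surjective ψ) (g : Matrix ι ι L) (hg : IsUnit g.det) :
    ∀ d : ι → L, (∀ i, d i ≠ 0) → ∃ (d' : ι → L) (G : Matrix ι ι A), (∀ i, d' i ≠ 0) ∧
      IsUnit G.det ∧ G.map ψ = Matrix.diagonal d' * g * Matrix.diagonal d := by
  refine Matrix.diagonal_transvection_induction_of_det_ne_zero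
    (fun g => ∀ d : ι → L, (∀ i, d i ≠ 0) → ∃ (d' : ι → L) (G : Matrix ι ι A), (∀ i, d' i ≠ 0) ∧
      IsUnit G.det ∧ G.map ψ = Matrix.diagonal d' * g * Matrix.diagonal d) g hg.ne_zero ?_ ?_ ?_
  · intro D hD d hd
    rw [Matrix.det_diagonal, Finset.prod_ne_zero_iff] at hD
    refine ⟨fun i => (D i * d i)⁻¹, 1, fun i => inv_ne_zero
      (mul_ne_zero (hD i (Finset.mem_univ i)) (hd i)), by simp, ?_⟩
    rw [Matrix.map_one _ (map_zero ψ) (map_one ψ), Matrix.diagonal_mul_diagonal,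
      Matrix.diagonal_mul_diagonal, ← Matrix.diagonal_one]
    congr 1
    ext i
    rw [mul_assoc, inv_mul_cancel₀ (mul_ne_zero (hD i (Finset.mem_univ i)) (hd i))]
  · intro t d hd
    obtain ⟨c, hc⟩ := hψ ((d t.i)⁻¹ * t.c * d t.j)
    refine ⟨fun i => (d i)⁻¹, Matrix.transvection t.i t.j c, fun i => inv_ne_zero (hd i), ?_, ?_⟩
    · rw [Matrix.det_transvection_of_ne _ _ t.hij]
      exact isUnit_one
    · rw [Matrix.TransvectionStruct.toMatrix, diagonal_mul_transvection_mul_diagonal hd, ← hc]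
      ext a b
      simp [Matrix.transvection, Matrix.one_apply, Matrix.single_apply, apply_ite ψ]
  · intro g₁ g₂ _ _ h₁ h₂ d hd
    obtain ⟨d₂, G₂, hd₂, hG₂, h₂⟩ := h₂ d hd
    obtain ⟨d₁, G₁, hd₁, hG₁, h₁⟩ := h₁ (fun i => (d₂ i)⁻¹) fun i => inv_ne_zero (hd₂ i)
    refine ⟨d₁, G₁ * G₂, hd₁, by rw [Matrix.det_mul]; exact hG₁.mul hG₂, ?_⟩
    have h : Matrix.diagonal (fun i => (d₂ i)⁻¹) * Matrix.diagonal d₂ = 1 := by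
      rw [Matrix.diagonal_mul_diagonal, ← Matrix.diagonal_one]
      congr 1
      ext i
      exact inv_mul_cancel₀ (hd₂ i)
    rw [Matrix.map_mul, h₁, h₂]
    calc _ = Matrix.diagonal d₁ * g₁ * (Matrix.diagonal (fun i => (d₂ i)⁻¹) * Matrix.diagonal d₂) *
          g₂ * Matrix.diagonal d := by simp only [Matrix.mul_assoc]
      _ = _ := by rw [h, Matrix.mul_one, Matrix.mul_assoc (Matrix.diagonal d₁)]

theorem diagonalizable_of_isMaximal {p : A} (hp : (Ideal.span {p}).IsMaximal)
    {e : Matrix ι ι A} (he : MCong p (e * e) e) : Diagonalizable p e := by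
  let _ : Field (A ⧸ Ideal.span {p}) := Ideal.Quotient.field _
  let ψ := Ideal.Quotient.mk (Ideal.span {p})
  have he' := MCong.iff_map.1 he
  rw [Matrix.map_mul] at he'
  obtain ⟨g, T, hg, hge⟩ := exists_conj_coordProj_of_isPrincipalIdealRing he'
  obtain ⟨d, W, hd, hW, hWg⟩ := exists_diagonal_mul_lift ψ Ideal.Quotient.mk_surjective g hg 1
    fun _ => one_ne_zero
  refine ⟨W, T, hW, MCong.iff_map.2 ?_⟩
  have hone : Matrix.diagonal (1 : ι → A ⧸ Ideal.span {p}) = 1 := Matrix.diagonal_one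
  rw [hone, Matrix.mul_one] at hWg
  have hcomm : Matrix.diagonal d * coordProj _ T = coordProj _ T * Matrix.diagonal d := by
    simp only [coordProj, Matrix.diagonal_mul_diagonal]
    congr 1
    ext i
    exact mul_comm _ _
  rw [Matrix.map_mul, Matrix.map_mul, coordProj_map, hWg, Matrix.mul_assoc, hge, ← Matrix.mul_assoc,
    hcomm, Matrix.mul_assoc]

end ResidueField

section IdempotentModPrime

theorem irreducible_map_fractionRing {K : Type*} [Field K] {p : K[X]} (hp : Irreducible p) :
    Irreducible (p.map ((algebraMap K[X] (FractionRing K[X])).comp C)) := by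
  rw [← Polynomial.map_map]
  have hprim : (p.map (C : K →+* K[X])).IsPrimitive := fun r hr => by
    rw [Polynomial.C_dvd_iff_dvd_coeff] at hr
    have h := hr p.natDegree
    rw [Polynomial.coeff_map, Polynomial.coeff_natDegree] at h
    exact isUnit_of_dvd_unit h (Polynomial.isUnit_C.2 (isUnit_iff_ne_zero.2
      (Polynomial.leadingCoeff_ne_zero.2 hp.ne_zero)))
  refine hprim.irreducible_iff_irreducible_map_fraction_map.1 ?_
  rw [← Polynomial.Bivariate.swap_C]
  exact (MulEquiv.irreducible_iff Polynomial.Bivariate.swap).2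
    (Polynomial.prime_C_iff.2 hp.prime).irreducible

universe u

variable {ι : Type*} [DecidableEq ι] [Fintype ι]

/-- Coefficients may be moved into `K(y)` after inverting the monic polynomials in `y`. -/
theorem exists_factor_monicLocalization {K : Type*} [Field K] (n : ℕ)
    {R : Type*} [CommRing R] [IsLocalRing R] (φ : MvPolynomial (Fin n) K[X] →+* R)
    (B : Type*) [CommRing B] [Algebra R[X] B] [IsLocalization (monicSubmonoid R) B] :
    ∃ (τ : (MvPolynomial (Fin n) K[X])[X] →+* MvPolynomial (Fin n) (FractionRing K[X])[X])
      (Φ : MvPolynomial (Fin n) (FractionRing K[X])[X] →+* B),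
      (∀ q : K[X], τ (C (MvPolynomial.C q)) =
        MvPolynomial.C (q.map ((algebraMap K[X] (FractionRing K[X])).comp C))) ∧
      Φ.comp τ = (algebraMap R[X] B).comp (mapRingHom φ) := by
  let κ : K →+* FractionRing K[X] := (algebraMap K[X] (FractionRing K[X])).comp C
  let g : K[X] →+* B := (algebraMap R[X] B).comp
    (mapRingHom ((φ.comp MvPolynomial.C).comp C))
  have hg : ∀ y : nonZeroDivisors K[X], IsUnit (g y) := fun y => by
    refine isUnit_algebraMap_of_isUnit_leadingCoeff ?_
    have hy := nonZeroDivisors.ne_zero y.2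
    rw [coe_mapRingHom, Polynomial.leadingCoeff_map]
    exact (isUnit_iff_ne_zero.2 (Polynomial.leadingCoeff_ne_zero.2 hy)).map _
  let θ : FractionRing K[X] →+* B := IsLocalization.lift hg
  have hθ : ∀ q, θ (algebraMap _ _ q) = g q := fun q => IsLocalization.lift_eq hg q
  let τ : (MvPolynomial (Fin n) K[X])[X] →+* MvPolynomial (Fin n) (FractionRing K[X])[X] :=
    eval₂RingHom (MvPolynomial.map (mapRingHom κ))
      (MvPolynomial.C (C (algebraMap K[X] (FractionRing K[X]) X)))
  let Φ : MvPolynomial (Fin n) (FractionRing K[X])[X] →+* B :=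
    MvPolynomial.eval₂Hom (eval₂RingHom θ (algebraMap R[X] B (C (φ (MvPolynomial.C X)))))
      fun i => algebraMap R[X] B (C (φ (MvPolynomial.X i)))
  refine ⟨τ, Φ, fun q => by simp [τ, κ], ?_⟩
  refine Polynomial.ringHom_ext' (MvPolynomial.ringHom_ext' (Polynomial.ringHom_ext' ?_ ?_) ?_) ?_
  · ext r
    simp [Φ, τ, κ, hθ, g]
  · simp [Φ, τ]
  · intro i
    simp [Φ, τ]
  · simp [Φ, τ, hθ, g]

/-- Local-global step for diagonalizing idempotents modulo `p` over a polynomial ring. -/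
theorem diagonalizable_of_local {R : Type u} [CommRing R] [IsDomain R] [IsNoetherianRing R]
    {p : R} {e : Matrix ι ι R[X]} (he : MCong (C p) (e * e) e)
    (hloc : ∀ (S : Type u) [CommRing S] [IsLocalRing S] (φ : R →+* S)
      (B : Type u) [CommRing B] [Algebra S[X] B] [IsLocalization (monicSubmonoid S) B],
      Diagonalizable (algebraMap S[X] B (C (φ p)))
        (e.map ((algebraMap S[X] B).comp (mapRingHom φ))))
    (h0 : Diagonalizable p (e.map (evalRingHom 0))) : Diagonalizable (C p) e := by
  have hpatch : ∀ (m : Ideal R) [m.IsMaximal],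
      Diagonalizable (C (algebraMap R (Localization.AtPrime m) p))
        (e.map (mapRingHom (algebraMap R (Localization.AtPrime m)))) := by
    intro m _
    by_cases hpm : p ∈ m
    · refine diagonalizable_of_monicLocalization
        (Localization (monicSubmonoid (Localization.AtPrime m))) ?_ ?_ (hloc _ _ _)
      · exact (IsLocalization.AtPrime.to_map_mem_maximal_iff _ m _).2 hpm
      · have := he.map (mapRingHom (algebraMap R (Localization.AtPrime m)))
        rw [Matrix.map_mul] at this
        simpa using this
    · refine ⟨1, ∅, by simp, MCong.of_isUnit ?_ _ _⟩
      exact Polynomial.isUnit_C.2 (IsLocalization.map_units (Localization.AtPrime m)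
        (⟨_, hpm⟩ : m.primeCompl))
  obtain ⟨W, hW, hWe⟩ := exists_conj_eval_zero _ e hpatch
  obtain ⟨W', T, hW', hWe'⟩ := h0.map C
  refine ⟨W' * W⁻¹, T, ?_, ?_⟩
  · rw [Matrix.det_mul]
    exact hW'.mul (Matrix.isUnit_nonsing_inv_det W hW)
  · have h1 : MCong (C p) (W⁻¹ * e) ((e.map (evalRingHom 0)).map C * W⁻¹) := by
      have := (hWe.mul_left W⁻¹).mul_right W⁻¹
      rw [Matrix.mul_assoc, Matrix.mul_assoc, Matrix.mul_nonsing_inv _ hW, Matrix.mul_one,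
        ← Matrix.mul_assoc, Matrix.nonsing_inv_mul _ hW, Matrix.one_mul] at this
      exact this
    rw [Matrix.mul_assoc, ← Matrix.mul_assoc _ W']
    refine (h1.mul_left W').trans ?_
    rw [← Matrix.mul_assoc]
    exact hWe'.mul_right _

/-- Idempotent matrices modulo a prime of `K[x]` over a polynomial ring in further variables are
diagonalizable. -/
theorem diagonalizable_mvPolynomial (n : ℕ) : ∀ {K : Type u} [Field K] {p : K[X]},
    Irreducible p → ∀ {e : Matrix ι ι (MvPolynomial (Fin n) K[X])},
    MCong (MvPolynomial.C p) (e * e) e → Diagonalizable (MvPolynomial.C p) e := by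
  induction n with
  | zero =>
    intro K _ p hp e he
    refine Diagonalizable.of_ringEquiv (MvPolynomial.isEmptyRingEquiv K[X] (Fin 0)) ?_
    have hC : MvPolynomial.isEmptyRingEquiv K[X] (Fin 0) (MvPolynomial.C p) = p :=
      (MvPolynomial.isEmptyRingEquiv K[X] (Fin 0)).apply_symm_apply p
    rw [hC]
    refine diagonalizable_of_isMaximal
      (PrincipalIdealRing.isMaximal_of_irreducible hp) ?_
    have := he.map (MvPolynomial.isEmptyRingEquiv K[X] (Fin 0)).toRingHom
    rw [Matrix.map_mul] at this
    exact hC ▸ this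
  | succ n ih =>
    intro K _ p hp e he
    let f := (MvPolynomial.finSuccEquiv K[X] n).toRingEquiv
    refine Diagonalizable.of_ringEquiv (B := (MvPolynomial (Fin n) K[X])[X]) f ?_
    have hf : f (MvPolynomial.C p) = C (MvPolynomial.C p) := by
      simp [f, MvPolynomial.finSuccEquiv_apply]
    have he' := he.map (B := (MvPolynomial (Fin n) K[X])[X]) f.toRingHom
    rw [Matrix.map_mul] at he'
    change MCong (f (MvPolynomial.C p)) (e.map f * e.map f) (e.map f) at he'
    rw [hf] at he' ⊢
    generalize e.map f = e at he'
    refine diagonalizable_of_local he' (fun S _ _ φ B _ _ _ => ?_) ?_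
    · obtain ⟨τ, Φ, hτ, hΦτ⟩ := exists_factor_monicLocalization n φ B
      have h := he'.map (B := MvPolynomial (Fin n) (FractionRing K[X])[X]) τ
      rw [hτ, Matrix.map_mul] at h
      have h' := (ih (irreducible_map_fractionRing hp) h).map Φ
      have hΦ : ∀ x, Φ (τ x) = algebraMap S[X] B (mapRingHom φ x) := RingHom.congr_fun hΦτ
      have hmap : (e.map τ).map Φ = e.map ((algebraMap S[X] B).comp (mapRingHom φ)) :=
        Matrix.ext fun i j => hΦ (e i j)
      rw [hmap, ← hτ, hΦ, coe_mapRingHom, map_C] at h'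
      exact h'
    · have h0 := he'.map (evalRingHom 0)
      rw [Matrix.map_mul, coe_evalRingHom, eval_C] at h0
      exact ih hp h0

end IdempotentModPrime

section Minors

variable {A : Type*} [CommRing A] {l m : ℕ}

theorem det_submatrix_mem {I : Ideal A} {i : ℕ} {M : Matrix (Fin l) (Fin m) A}
    (h : ∀ a ∈ minorsSet i M, a ∈ I) (f : Fin i → Fin l) (g : Fin i → Fin m) :
    (M.submatrix f g).det ∈ I := by
  by_cases hf : Function.Injective f
  · by_cases hg : Function.Injective g
    · have hmem := h _ ⟨f ∘ Tuple.sort f, g ∘ Tuple.sort g,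
        (Tuple.monotone_sort f).strictMono_of_injective (hf.comp (Tuple.sort f).injective),
        (Tuple.monotone_sort g).strictMono_of_injective (hg.comp (Tuple.sort g).injective), rfl⟩
      have heq : M.submatrix (f ∘ Tuple.sort f) (g ∘ Tuple.sort g) =
          ((M.submatrix f g).submatrix (Tuple.sort f) id).submatrix id (Tuple.sort g) := rfl
      rw [heq, Matrix.det_permute', Matrix.det_permute, ← mul_assoc] at hmem
      refine (Ideal.unit_mul_mem_iff_mem I ?_).1 hmem
      exact ((Equiv.Perm.sign _).isUnit.map (Int.castRingHom A)).mul
        ((Equiv.Perm.sign _).isUnit.map (Int.castRingHom A))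
    · obtain ⟨a, b, hab, hne⟩ := Function.not_injective_iff.1 hg
      rw [Matrix.det_zero_of_column_eq hne fun c => by simp [hab]]
      exact zero_mem I
  · obtain ⟨a, b, hab, hne⟩ := Function.not_injective_iff.1 hf
    rw [Matrix.det_zero_of_row_eq hne (by ext c; simp [hab])]
    exact zero_mem I

theorem det_submatrix_mul_mem_left {I : Ideal A} {κ : Type*} [Fintype κ] [DecidableEq κ]
    {M : Matrix (Fin l) (Fin m) A} (h : ∀ f g, (M.submatrix (f : κ → Fin l) g).det ∈ I)
    (U : Matrix (Fin l) (Fin l) A) (f : κ → Fin l) (g : κ → Fin m) :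
    ((U * M).submatrix f g).det ∈ I := by
  have heq : (U * M).submatrix f g = fun a => ∑ b, U (f a) b • fun c => M b (g c) := by
    ext a c
    simp [Matrix.mul_apply, Finset.sum_apply]
  rw [heq]
  change (Matrix.detRowAlternating : (κ → A) [⋀^κ]→ₗ[A] A).toMultilinearMap _ ∈ I
  rw [MultilinearMap.map_sum]
  refine sum_mem fun r _ => ?_
  rw [MultilinearMap.map_smul_univ]
  exact I.mul_mem_left _ (h r g)

theorem det_submatrix_mul_mem_right {I : Ideal A} {κ : Type*} [Fintype κ] [DecidableEq κ]
    {M : Matrix (Fin l) (Fin m) A} (h : ∀ f g, (M.submatrix (f : κ → Fin l) g).det ∈ I)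
    (V : Matrix (Fin m) (Fin m) A) (f : κ → Fin l) (g : κ → Fin m) :
    ((M * V).submatrix f g).det ∈ I := by
  rw [← Matrix.det_transpose, Matrix.transpose_submatrix, Matrix.transpose_mul]
  refine det_submatrix_mul_mem_left (fun g f => ?_) _ _ _
  rw [← Matrix.transpose_submatrix, Matrix.det_transpose]
  exact h f g

theorem det_submatrix_mem_of_matrixEquiv {I : Ideal A} {i : ℕ} {M N : Matrix (Fin l) (Fin m) A}
    (hMN : MatrixEquiv M N) (h : ∀ a ∈ minorsSet i N, a ∈ I) (f : Fin i → Fin l)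
    (g : Fin i → Fin m) : (M.submatrix f g).det ∈ I := by
  obtain ⟨U, V, -, -, rfl⟩ := hMN
  exact det_submatrix_mul_mem_right (det_submatrix_mul_mem_left (det_submatrix_mem h) U) V f g

theorem matrixEquiv_symm {M N : Matrix (Fin l) (Fin m) A} (h : MatrixEquiv M N) :
    MatrixEquiv N M := by
  obtain ⟨U, V, hU, hV, rfl⟩ := h
  refine ⟨U⁻¹, V⁻¹, Matrix.isUnit_nonsing_inv_det U hU, Matrix.isUnit_nonsing_inv_det V hV, ?_⟩
  rw [Matrix.mul_assoc, Matrix.mul_assoc, Matrix.mul_nonsing_inv _ hV, Matrix.mul_one,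
    Matrix.nonsing_inv_mul_cancel_left _ _ hU]

theorem det_submatrix_diagonal_mul {κ : Type*} [Fintype κ] [DecidableEq κ] (d : Fin l → A)
    (G : Matrix (Fin l) (Fin m) A) (f : κ → Fin l) (g : κ → Fin m) :
    ((Matrix.diagonal d * G).submatrix f g).det = (∏ a, d (f a)) * (G.submatrix f g).det := by
  rw [← Matrix.det_mul_column]
  congr 1
  ext a b
  simp [Matrix.diagonal_mul]

theorem det_bordered [IsDomain A] {κ : Type*} [Fintype κ] [DecidableEq κ]
    (G : Matrix (Fin l) (Fin m) A) (f : κ → Fin l) (g : κ → Fin m)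
    (h : (G.submatrix f g).det ≠ 0) (i : Fin l) (j : Fin m) :
    (G.submatrix (Sum.elim (fun _ : Unit => i) f) (Sum.elim (fun _ : Unit => j) g)).det =
      (G.submatrix f g).det * G i j -
        (G.submatrix id g * (G.submatrix f g).adjugate * G.submatrix f id) i j := by
  set M := G.submatrix f g with hM
  set r : Matrix Unit κ A := G.submatrix (fun _ => i) g
  set c : Matrix κ Unit A := G.submatrix f (fun _ => j)
  set d : Matrix Unit Unit A := G.submatrix (fun _ => i) (fun _ => j)
  have hB : G.submatrix (Sum.elim (fun _ : Unit => i) f) (Sum.elim (fun _ : Unit => j) g) =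
      Matrix.fromBlocks d r c M := by
    ext (a | a) (b | b) <;> rfl
  have hmul : Matrix.fromBlocks d r c M *
      Matrix.fromBlocks (M.det • (1 : Matrix Unit Unit A)) 0 (-(M.adjugate * c)) 1 =
      Matrix.fromBlocks (M.det • d - r * M.adjugate * c) r 0 M := by
    rw [Matrix.fromBlocks_multiply]
    congr 1
    · simp [sub_eq_add_neg, Matrix.mul_assoc]
    · simp
    · rw [Matrix.mul_neg, ← Matrix.mul_assoc, Matrix.mul_adjugate]
      simp
    · simp
  have hdet := congrArg Matrix.det hmul
  rw [Matrix.det_mul, Matrix.det_fromBlocks_zero₁₂, Matrix.det_fromBlocks_zero₂₁] at hdet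
  have hdet' := mul_right_cancel₀ h (by simpa using hdet)
  rw [hB, hdet']
  rfl

end Minors

section InnerInverse

variable {A : Type*} [CommRing A] [IsDomain A] {p : A} {l k : ℕ}

theorem sum_castLE_le_sum_strictMono (hk : k ≤ l) {s : Fin l → ℕ} (hs : Monotone s)
    {f : Fin k → Fin l} (hf : StrictMono f) : ∑ i, s (Fin.castLE hk i) ≤ ∑ i, s (f i) := by
  have hle : ∀ (n : ℕ) (hn : n < k), n ≤ (f ⟨n, hn⟩ : ℕ) := fun n => by
    induction n with
    | zero => exact fun _ => Nat.zero_le _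
    | succ n ih =>
      intro hn
      have h1 := ih (n.lt_succ_self.trans hn)
      have h2 : f ⟨n, n.lt_succ_self.trans hn⟩ < f ⟨n + 1, hn⟩ := hf (by simp [Fin.lt_def])
      rw [Fin.lt_def] at h2
      omega
  exact Finset.sum_le_sum fun i _ => hs (Fin.le_def.2 (hle i i.2))

/-- A minor of `G` whose bordering minors all vanish modulo `p` gives a partial inner inverse. -/
theorem exists_inner_inverse_of_minor {G : Matrix (Fin l) (Fin l) A} {f g : Fin k → Fin l}
    (h : ∀ i j, p ∣ (G.submatrix (Sum.elim (fun _ : Unit => i) f)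
      (Sum.elim (fun _ : Unit => j) g)).det) :
    ∃ (X : Matrix (Fin l) (Fin k) A) (Y : Matrix (Fin k) (Fin l) A),
      MCong p ((G.submatrix f g).det • G) (G * (X * Y) * G) := by
  by_cases h0 : (G.submatrix f g).det = 0
  · exact ⟨0, 0, MCong.of_eq (by simp [h0])⟩
  · have hg : G * (1 : Matrix (Fin l) (Fin l) A).submatrix id g = G.submatrix id g := by
      ext a b
      rw [Matrix.mul_apply]
      simp [Matrix.one_apply]
    have hf : (1 : Matrix (Fin l) (Fin l) A).submatrix f id * G = G.submatrix f id := by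
      ext a b
      rw [Matrix.mul_apply]
      simp [Matrix.one_apply]
    refine ⟨(1 : Matrix (Fin l) (Fin l) A).submatrix id g * (G.submatrix f g).adjugate,
      (1 : Matrix (Fin l) (Fin l) A).submatrix f id, ?_⟩
    rw [← Matrix.mul_assoc, ← Matrix.mul_assoc, hg, Matrix.mul_assoc _ _ G, hf]
    intro i j
    have := h i j
    rwa [det_bordered G f g h0] at this

theorem exists_inner_inverse_combination (hp : p ≠ 0) (hk : k ≤ l) {s : Fin l → ℕ}
    (hs : Monotone s) {sv : ℕ} (hsv : ∀ i, s i ≤ sv) {G : Matrix (Fin l) (Fin l) A}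
    (h1 : p ^ (∑ i, s (Fin.castLE hk i)) ∈
      Ideal.span (minorsSet k (Matrix.diagonal (fun i => p ^ s i) * G)))
    (h2 : ∀ f g : Fin (k + 1) → Fin l, p ^ (∑ i, s (Fin.castLE hk i) + sv + 1) ∣
      ((Matrix.diagonal (fun i => p ^ s i) * G).submatrix f g).det) :
    ∃ (P : Type) (_ : Fintype P) (a : P → A) (X : P → Matrix (Fin l) (Fin k) A)
      (Y : P → Matrix (Fin k) (Fin l) A), ∑ i, a i = 1 ∧
      ∀ i, MCong p (a i • G) (G * (X i * Y i) * G) := by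
  classical
  set σ := ∑ i, s (Fin.castLE hk i)
  let P := {fg : (Fin k → Fin l) × (Fin k → Fin l) // StrictMono fg.1 ∧ StrictMono fg.2}
  let D := Matrix.diagonal (fun i => p ^ s i) * G
  have hrange : minorsSet k D =
      Set.range fun fg : P => (D.submatrix fg.1.1 fg.1.2).det := by
    ext a
    constructor
    · rintro ⟨f, g, hf, hg, rfl⟩
      exact ⟨⟨(f, g), hf, hg⟩, rfl⟩
    · rintro ⟨⟨⟨f, g⟩, hf, hg⟩, rfl⟩
      exact ⟨f, g, hf, hg, rfl⟩
  rw [hrange, Ideal.mem_span_range_iff_exists_fun] at h1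
  obtain ⟨c, hc⟩ := h1
  let w : P → ℕ := fun fg => ∑ a, s (fg.1.1 a) - σ
  have hw : ∀ fg : P, ∑ a, s (fg.1.1 a) = σ + w fg := fun fg =>
    (Nat.add_sub_of_le (sum_castLE_le_sum_strictMono hk hs fg.2.1)).symm
  let a : P → A := fun fg => c fg * p ^ w fg * (G.submatrix fg.1.1 fg.1.2).det
  have hsum : ∑ fg, a fg = 1 := by
    refine mul_left_cancel₀ (pow_ne_zero σ hp) ?_
    rw [mul_one, Finset.mul_sum]
    refine Eq.trans (Finset.sum_congr rfl fun fg _ => ?_) hc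
    rw [det_submatrix_diagonal_mul, Finset.prod_pow_eq_pow_sum, hw, pow_add]
    simp only [a]
    ring
  have hex : ∀ fg : P, ∃ (X : Matrix (Fin l) (Fin k) A) (Y : Matrix (Fin k) (Fin l) A),
      MCong p (a fg • G) (G * (X * Y) * G) := by
    rintro fg
    by_cases h0 : w fg = 0
    · obtain ⟨X, Y, hXY⟩ := exists_inner_inverse_of_minor (p := p) (G := G) (f := fg.1.1)
        (g := fg.1.2) fun i j => by
          let ε : Fin (k + 1) ≃ Unit ⊕ Fin k := Fintype.equivOfCardEq (by simp [add_comm])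
          have := h2 (Sum.elim (fun _ => i) fg.1.1 ∘ ε) (Sum.elim (fun _ => j) fg.1.2 ∘ ε)
          rw [← Matrix.submatrix_submatrix, Matrix.det_submatrix_equiv_self,
            det_submatrix_diagonal_mul, Finset.prod_pow_eq_pow_sum, Fintype.sum_sum_type] at this
          simp only [Finset.univ_unique, Finset.sum_singleton, Sum.elim_inl, Sum.elim_inr] at this
          rw [hw, h0, add_zero] at this
          have hle : p ^ (s i + σ) * p ∣ p ^ (σ + sv + 1) := by
            rw [← pow_succ]
            exact pow_dvd_pow p (by have := hsv i; omega)
          exact (mul_dvd_mul_iff_left (pow_ne_zero _ hp)).1 (hle.trans this)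
      refine ⟨(c fg * p ^ w fg) • X, Y, ?_⟩
      have := hXY.smul (c fg * p ^ w fg)
      rwa [smul_smul, ← Matrix.smul_mul, ← Matrix.mul_smul, ← Matrix.smul_mul] at this
    · refine ⟨0, 0, fun i j => ?_⟩
      simp only [Matrix.zero_mul, Matrix.mul_zero, Matrix.zero_apply, sub_zero, Matrix.smul_apply,
        smul_eq_mul, a]
      exact (((dvd_pow_self p h0).mul_left _).mul_right _).mul_right _
  choose X Y hXY using hex
  exact ⟨P, inferInstance, a, X, Y, hsum, hXY⟩

/-- If the idempotent attached to an inner inverse of `G` is diagonalizable modulo `p`, then `p`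
divides the last `l - k` rows of `G` after an invertible row transformation. -/
theorem exists_isUnit_det_mul_eq_diagonal_mul (hp : Prime p) (hk : k ≤ l)
    (hdiag : ∀ e : Matrix (Fin l) (Fin l) A, MCong p (e * e) e → Diagonalizable p e)
    {G : Matrix (Fin l) (Fin l) A} {P : Type} [Fintype P] {a : P → A}
    {X : P → Matrix (Fin l) (Fin k) A} {Y : P → Matrix (Fin k) (Fin l) A} (ha : ∑ i, a i = 1)
    (hXY : ∀ i, MCong p (a i • G) (G * (X i * Y i) * G)) :
    ∃ U G₁ : Matrix (Fin l) (Fin l) A, IsUnit U.det ∧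
      U * G = Matrix.diagonal (fun i : Fin l => if (i : ℕ) < k then 1 else p) * G₁ := by
  classical
  let H := ∑ i, X i * Y i
  have hH : MCong p G (G * H * G) := by
    have := MCong.sum (s := Finset.univ) fun i _ => hXY i
    rwa [← Finset.sum_smul, ha, one_smul, ← Finset.sum_mul, ← Finset.mul_sum] at this
  let e := 1 - G * H
  have heG : MCong p (e * G) 0 := by
    have := hH.sub (MCong.refl (G * H * G))
    rwa [sub_self, ← Matrix.one_mul (G - _), Matrix.one_mul,
      show G - G * H * G = e * G by simp [e, Matrix.sub_mul]] at this
  have he : MCong p (e * e) e := by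
    have := (MCong.refl e).sub (heG.mul_right H)
    rwa [Matrix.zero_mul, sub_zero, Matrix.mul_assoc,
      show e - e * (G * H) = e * e by simp [e, Matrix.mul_sub]] at this
  obtain ⟨W, T, hW, hWe⟩ := hdiag e he
  have hrow : ∀ i ∈ T, ∀ j, p ∣ (W * G) i j := fun i hi j => by
    have h1 := hWe.mul_right G
    rw [Matrix.mul_assoc, Matrix.mul_assoc] at h1
    have h2 := (h1.symm.trans (heG.mul_left W)) i j
    rw [coordProj_mul_apply, if_pos hi] at h2
    simpa using h2
  have hcard : l - k ≤ T.card := by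
    have hprime : (Ideal.span {p}).IsPrime := (Ideal.span_singleton_prime hp.ne_zero).2 hp
    let L := FractionRing (A ⧸ Ideal.span {p})
    let φ : A →+* L := (algebraMap _ L).comp (Ideal.Quotient.mk (Ideal.span {p}))
    have hφ : ∀ x, φ x = 0 ↔ p ∣ x := fun x => by
      rw [RingHom.comp_apply, IsFractionRing.to_map_eq_zero_iff, Ideal.Quotient.eq_zero_iff_mem,
        Ideal.mem_span_singleton]
    have hcong : ∀ {κ μ : Type} {M N : Matrix κ μ A}, MCong p M N → M.map φ = N.map φ :=
      fun h => Matrix.ext fun i j => by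
        have := (hφ _).2 (h i j)
        rwa [map_sub, sub_eq_zero] at this
    obtain ⟨i, hi⟩ : ∃ i, φ (a i) ≠ 0 := by
      by_contra! hall
      have := congrArg φ ha
      rw [map_sum, Finset.sum_eq_zero fun i _ => hall i, map_one] at this
      exact zero_ne_one this
    have hGk : (G.map φ).rank ≤ k := by
      have h := hcong (hXY i)
      have h' : φ (a i) • G.map φ = G.map φ * (X i).map φ * ((Y i).map φ * G.map φ) := by
        rw [Matrix.map_mul, Matrix.map_mul, Matrix.map_mul] at h
        rw [← Matrix.mul_assoc, Matrix.mul_assoc _ _ ((Y i).map φ), ← h]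
        ext
        simp
      have h'' : G.map φ = (φ (a i))⁻¹ • (G.map φ * (X i).map φ) * ((Y i).map φ * G.map φ) := by
        rw [Matrix.smul_mul, ← h', smul_smul, inv_mul_cancel₀ hi, one_smul]
      rw [h'']
      exact (Matrix.rank_mul_le_left _ _).trans ((Matrix.rank_le_width _))
    have hWφ : IsUnit (W.map φ).det := by
      rw [← RingHom.mapMatrix_apply, ← RingHom.map_det]
      exact hW.map φ
    have h := hcong hWe
    have hcompl : (coordProj L Tᶜ) = 1 - coordProj L T := by
      ext i j
      by_cases hi : i ∈ T <;> simp [coordProj, Matrix.diagonal_apply, Matrix.one_apply, hi]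
    have h' : coordProj L Tᶜ * W.map φ = W.map φ * (G.map φ * H.map φ) := by
      have heφ : e.map φ = 1 - G.map φ * H.map φ := by
        rw [← Matrix.map_mul, Matrix.map_sub _ (map_sub φ),
          Matrix.map_one _ (map_zero φ) (map_one φ)]
      rw [Matrix.map_mul, Matrix.map_mul, coordProj_map, heφ] at h
      rw [hcompl, Matrix.sub_mul, ← h, Matrix.mul_sub, Matrix.one_mul, Matrix.mul_one,
        sub_sub_cancel]
    have hr := congrArg Matrix.rank h'
    rw [Matrix.rank_mul_eq_left_of_isUnit_det _ _ hWφ, rank_coordProj,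
      Matrix.rank_mul_eq_right_of_isUnit_det _ _ hWφ, Finset.card_compl, Fintype.card_fin] at hr
    have := (Matrix.rank_mul_le_left (G.map φ) (H.map φ)).trans hGk
    omega
  obtain ⟨T', hT', hcard'⟩ := Finset.exists_subset_card_eq hcard
  have hS : (Finset.univ.filter fun i : Fin l => ¬ (i : ℕ) < k).card = T'.card := by
    rw [hcard', Finset.filter_not, Finset.card_sdiff_of_subset (Finset.filter_subset _ _),
      Fin.card_filter_val_lt]
    simp [hk]
  obtain ⟨τ, hτ⟩ := exists_perm_mem_iff hS
  have hdvd : ∀ i j : Fin l, (if (i : ℕ) < k then 1 else p) ∣ (W.submatrix τ id * G) i j := by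
    intro i j
    split_ifs with hi
    · exact one_dvd _
    · exact hrow _ (hT' ((hτ i).2 (by simpa using hi))) j
  choose G₁ hG₁ using hdvd
  refine ⟨W.submatrix τ id, Matrix.of G₁, isUnit_det_submatrix_perm τ hW, ?_⟩
  ext i j
  rw [Matrix.diagonal_mul, hG₁, Matrix.of_apply]

end InnerInverse

section PolyImage

variable {K : Type*} [Field K]

/-- `K[x₀, …, xₙ]` as the polynomial ring in `x₁, …, xₙ` over `K[x₀]`. -/
noncomputable def polyImageEquiv (K : Type*) [Field K] (n : ℕ) :
    MvPolynomial (Fin (n + 1)) K ≃ₐ[K] MvPolynomial (Fin n) K[X] :=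
  (MvPolynomial.renameEquiv K (finSuccEquiv n)).trans (MvPolynomial.optionEquivRight K (Fin n))

theorem polyImageEquiv_polyImage (n : ℕ) (p : K[X]) :
    polyImageEquiv K n (polyImage n p) = MvPolynomial.C p := by
  have h : polyImageEquiv K n (MvPolynomial.X 0) = MvPolynomial.C X := by
    simp [polyImageEquiv]
  rw [polyImage, ← Polynomial.aeval_algHom_apply, h]
  induction p using Polynomial.induction_on' with
  | add p q hp hq => rw [map_add, hp, hq, map_add]
  | monomial n a =>
    rw [Polynomial.aeval_monomial, ← Polynomial.C_mul_X_pow_eq_monomial, map_mul, map_pow]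
    rfl

theorem prime_polyImage (n : ℕ) {p : K[X]} (hp : Irreducible p) : Prime (polyImage n p) := by
  rw [← MulEquiv.prime_iff (polyImageEquiv K n), polyImageEquiv_polyImage,
    MvPolynomial.prime_C_iff]
  exact hp.prime

theorem diagonalizable_polyImage {l : ℕ} (n : ℕ) {p : K[X]} (hp : Irreducible p)
    {e : Matrix (Fin l) (Fin l) (MvPolynomial (Fin (n + 1)) K)}
    (he : MCong (polyImage n p) (e * e) e) : Diagonalizable (polyImage n p) e := by
  refine Diagonalizable.of_ringEquiv (B := MvPolynomial (Fin n) K[X])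
    (polyImageEquiv K n).toRingEquiv ?_
  have hpi : (polyImageEquiv K n).toRingEquiv (polyImage n p) = MvPolynomial.C p :=
    polyImageEquiv_polyImage n p
  rw [hpi]
  refine diagonalizable_mvPolynomial n hp ?_
  have := he.map (polyImageEquiv K n).toRingEquiv.toRingHom
  rw [Matrix.map_mul] at this
  rw [← hpi]
  exact this

end PolyImage

end QS

/-- let `F ∈ A^{l×l}` with `det F = p^t` (`p ∈ K[x₁]` irreducible, `t ≥ 1`)
and Smith form `diag(p^{s₁}, …, p^{s_l})`, `s₁ ≤ ⋯ ≤ s_l` (i.e.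
`d_i(F) = p^{s₁ + ⋯ + s_i}` up to associates for every `i`).  If
`F ∼ diag(p^{s₁}, …, p^{s_k}, p^s, …, p^s) · G` with `s_k ≤ s < s_{k+1}` and
`J_i(F) = A` for `i = 1, …, k`, then there is `U ∈ GL_l(A)` with
`U·G = diag(1, …, 1, p, …, p) · G₁` (with `k` ones and `l − k` entries `p`)
for some `G₁ ∈ A^{l×l}`. -/
theorem stmt8 {K : Type*} [Field K] {n l : ℕ} (p : Polynomial K) (hp : Irreducible p)
    (t : ℕ) (ht : 0 < t)
    (F : Matrix (Fin l) (Fin l) (MvPolynomial (Fin (n + 1)) K))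
    (hdet : F.det = polyImage n p ^ t)
    (s : Fin l → ℕ) (hs : Monotone s)
    (hSmith : ∀ i : Fin l,
      IsGcdOf (polyImage n p ^ (∑ j ∈ Finset.Iic i, s j)) (minorsSet ((i : ℕ) + 1) F))
    (k : ℕ) (hk : k < l) (sv : ℕ)
    (hsk : ∀ i : Fin l, (i : ℕ) < k → s i ≤ sv) (hsk' : sv < s ⟨k, hk⟩)
    (G : Matrix (Fin l) (Fin l) (MvPolynomial (Fin (n + 1)) K))
    (hFG : MatrixEquiv F
      (Matrix.diagonal (fun i : Fin l =>
        if (i : ℕ) < k then polyImage n p ^ s i else polyImage n p ^ sv) * G))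
    (hJ : ∀ i : ℕ, 1 ≤ i → i ≤ k → ReducedMinorsUnitIdeal i F) :
    ∃ (U G₁ : Matrix (Fin l) (Fin l) (MvPolynomial (Fin (n + 1)) K)),
      IsUnit U.det ∧
      U * G = Matrix.diagonal (fun i : Fin l =>
        if (i : ℕ) < k then 1 else polyImage n p) * G₁ := by
  have hP := QS.prime_polyImage n hp
  have hdiag (e : Matrix (Fin l) (Fin l) (MvPolynomial (Fin (n + 1)) K)) :=
    QS.diagonalizable_polyImage n hp (e := e)
  generalize polyImage n p = P at *
  let s' : Fin l → ℕ := fun i => if (i : ℕ) < k then s i else sv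
  have hs'sv : ∀ i, s' i ≤ sv := fun i => by
    by_cases hi : (i : ℕ) < k
    · simpa [s', hi] using hsk i hi
    · simp [s', hi]
  have hs' : Monotone s' := fun i j hij => by
    by_cases hj : (j : ℕ) < k
    · have hi : (i : ℕ) < k := (Fin.le_def.1 hij).trans_lt hj
      simpa [s', hi, hj] using hs hij
    · simpa [s', hj] using hs'sv i
  have hD : (fun i : Fin l => if (i : ℕ) < k then P ^ s i else P ^ sv) = fun i => P ^ s' i := by
    ext1 i
    by_cases hi : (i : ℕ) < k <;> simp [s', hi]
  rw [hD] at hFG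
  have hσ : ∑ i, s' (Fin.castLE hk.le i) = ∑ j ∈ Finset.Iio (⟨k, hk⟩ : Fin l), s j := by
    refine Finset.sum_bij (fun i _ => Fin.castLE hk.le i) ?_ ?_ ?_ ?_
    · intro i _
      simp [Fin.lt_def]
    · intro i _ j _ h
      simpa using h
    · intro j hj
      exact ⟨⟨j, Fin.lt_def.1 (Finset.mem_Iio.1 hj)⟩, Finset.mem_univ _, rfl⟩
    · intro i _
      simp [s']
  have h1 : P ^ (∑ i, s' (Fin.castLE hk.le i)) ∈
      Ideal.span (minorsSet k (Matrix.diagonal (fun i => P ^ s' i) * G)) := by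
    suffices h : P ^ (∑ i, s' (Fin.castLE hk.le i)) ∈ Ideal.span (minorsSet k F) by
      refine Ideal.span_le.2 ?_ h
      rintro _ ⟨f, g, -, -, rfl⟩
      exact QS.det_submatrix_mem_of_matrixEquiv hFG (fun a ha => Ideal.subset_span ha) f g
    rcases Nat.eq_zero_or_pos k with rfl | hk0
    · rw [Finset.univ_eq_empty, Finset.sum_empty, pow_zero]
      exact Ideal.subset_span ⟨Fin.elim0, Fin.elim0, fun i => i.elim0, fun i => i.elim0,
        Matrix.det_isEmpty.symm⟩
    · obtain ⟨d, hd, htop⟩ := hJ k hk0 le_rfl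
      have hdmem : d ∈ Ideal.span (minorsSet k F) := by
        have h := Ideal.mul_mem_mul (Ideal.mem_span_singleton_self d)
          (htop ▸ Submodule.mem_top : (1 : MvPolynomial (Fin (n + 1)) K) ∈ _)
        rw [mul_one, Ideal.span_mul_span'] at h
        refine Ideal.span_mono ?_ h
        rintro _ ⟨a, rfl, b, hb, rfl⟩
        exact hb
      have hg := hSmith ⟨k - 1, by omega⟩
      have hIic : Finset.Iic (⟨k - 1, by omega⟩ : Fin l) = Finset.Iio ⟨k, hk⟩ := by
        ext j
        simp only [Finset.mem_Iic, Finset.mem_Iio, Fin.le_def, Fin.lt_def]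
        omega
      rw [hIic, ← hσ, show k - 1 + 1 = k from Nat.sub_add_cancel hk0] at hg
      exact Ideal.mem_of_dvd _ (hg.2 d hd.1) hdmem
  have h2 : ∀ f g : Fin (k + 1) → Fin l, P ^ (∑ i, s' (Fin.castLE hk.le i) + sv + 1) ∣
      ((Matrix.diagonal (fun i => P ^ s' i) * G).submatrix f g).det := fun f g => by
    have hIic : ∑ j ∈ Finset.Iic (⟨k, hk⟩ : Fin l), s j =
        ∑ i, s' (Fin.castLE hk.le i) + s ⟨k, hk⟩ := by
      rw [hσ, ← Finset.Iio_insert, Finset.sum_insert Finset.notMem_Iio_self, add_comm]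
    rw [← Ideal.mem_span_singleton]
    refine QS.det_submatrix_mem_of_matrixEquiv (QS.matrixEquiv_symm hFG) (fun a ha => ?_) f g
    rw [Ideal.mem_span_singleton]
    refine (pow_dvd_pow P ?_).trans ((hSmith ⟨k, hk⟩).1 a ha)
    omega
  obtain ⟨_, _, a, X, Y, ha, hXY⟩ :=
    QS.exists_inner_inverse_combination hP.ne_zero hk.le hs' hs'sv h1 h2
  exact QS.exists_isUnit_det_mul_eq_diagonal_mul hP hk.le hdiag ha hXY
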